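/- arXiv:1404.4852 — 5 statements merged into one kernel-verified Lean document; each statement's English description precedes it below -/
import Mathlib

section
/- Let r ≥ 1 and n ≥ 4. Suppose that for every polynomial Q' of total degree at most 2 in n-1 variables (x'_1, …, x'_{n-2}, z') over Z_{2^r}, all natural numbers q' ≤ r and v' ≤ r, all elements k', w', g', u' ∈ Z_{2^r}, and every polynomial T' of total degree at most 1 in x'_1, …, x'_{n-2}, the sum Σ_{i=0}^{2^{q'} - 1} Σ_{j=0}^{2^{v'} - 1} #(k' + w' 2^{r-q'} i + g' 2^{r-v'} j)_{Q', z' = T'(x') + u' 2^{r-v'} j} is divisible by 2^{⌈(r(n-2) + min(2v', r))/2⌉ + q' - 1}. Then for every polynomial Q of total degree at most 2 in n variables (x_1, …, x_{n-1}, z) over Z_{2^r}, all natural numbers q ≤ r and v ≤ r, all elements k, w, g, u ∈ Z_{2^r}, and every polynomial T of total degree at most 1 in x_1, …, x_{n-1}, the sum Σ_{i=0}^{2^q - 1} Σ_{j=0}^{2^v - 1} #(k + w 2^{r-q} i + g 2^{r-v} j)_{Q, z = T(x) + u 2^{r-v} j} is divisible by 2^{⌈(r(n-1) + min(2v, r))/2⌉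 + q - 1}. -/
open Matrix

/-- quadratic function -/
def qf {ι : Type} [Fintype ι] (A : Matrix ι ι ℤ) (b : ι → ℤ) (c : ℤ) (x : ι → ℤ) : ℤ :=
  c + b ⬝ᵥ x + x ⬝ᵥ (A *ᵥ x)

/-- gradient -/
def qD {ι : Type} [Fintype ι] (A : Matrix ι ι ℤ) (b : ι → ℤ) (x : ι → ℤ) : ι → ℤ :=
  b + A *ᵥ x + Aᵀ *ᵥ x

theorem qf_add {ι : Type} [Fintype ι] (A : Matrix ι ι ℤ) (b : ι → ℤ) (c : ℤ) (x h : ι → ℤ) :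
    qf A b c (x + h) = qf A b c x + qD A b x ⬝ᵥ h + h ⬝ᵥ (A *ᵥ h) := by
  have h1 : (Aᵀ *ᵥ x) ⬝ᵥ h = x ⬝ᵥ (A *ᵥ h) := by
    rw [Matrix.mulVec_transpose, Matrix.dotProduct_mulVec]
  have h2 : (A *ᵥ x) ⬝ᵥ h = h ⬝ᵥ (A *ᵥ x) := dotProduct_comm _ _
  simp only [qf, qD, Matrix.mulVec_add, dotProduct_add, add_dotProduct, h1, h2]
  ring

/-- box sum -/
def bs {ι : Type} [Fintype ι] [DecidableEq ι] (N : ℕ) (φ : (ι → ℤ) → ℕ) : ℕ :=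
  ∑ x : ι → Fin N, φ (fun i => ((x i : ℕ) : ℤ))

theorem fin_split (K M : ℕ) (ψ : ℤ → ℕ) :
    ∑ j : Fin (K * M), ψ ((j : ℕ) : ℤ) =
      ∑ a : Fin M, ∑ t : Fin K, ψ (((a : ℕ) : ℤ) + M * ((t : ℕ) : ℤ)) := by
  rw [← Equiv.sum_comp finProdFinEquiv, Fintype.sum_prod_type, Finset.sum_comm]
  simp

theorem fin_periodic (K M : ℕ) (ψ : ℤ → ℕ) (h : ∀ x t, ψ (x + M * t) = ψ x) :
    ∑ j : Fin (K * M), ψ ((j : ℕ) : ℤ) = K * ∑ a : Fin M, ψ ((a : ℕ) : ℤ) := by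
  rw [fin_split, Finset.mul_sum]
  simp [h]

theorem bs_split {ι : Type} [Fintype ι] [DecidableEq ι] (K M : ℕ) (φ : (ι → ℤ) → ℕ) :
    bs (K * M) φ = ∑ a : ι → Fin M, bs K (fun y => φ ((fun i => ((a i : ℕ) : ℤ)) + (M : ℤ) • y)) := by
  unfold bs
  let e : (ι → Fin M) × (ι → Fin K) ≃ (ι → Fin (K * M)) :=
    ((Equiv.prodComm _ _).trans (Equiv.arrowProdEquivProdArrow ι (fun _ => Fin K) (fun _ => Fin M)).symm).trans
      (Equiv.arrowCongr (Equiv.refl ι) finProdFinEquiv)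
  rw [← Equiv.sum_comp e, Fintype.sum_prod_type]
  refine Finset.sum_congr rfl fun a _ => Finset.sum_congr rfl fun y _ => ?_
  congr 1

theorem bs_congr {ι : Type} [Fintype ι] [DecidableEq ι] (K : ℕ) (φ ψ : (ι → ℤ) → ℕ)
    (h : ∀ x, φ x = ψ x) : bs K φ = bs K ψ := by
  rw [funext h]

theorem bs_const {ι : Type} [Fintype ι] [DecidableEq ι] (K c : ℕ) :
    bs (ι := ι) K (fun _ => c) = K ^ Fintype.card ι * c := by
  simp [bs]

theorem bs_periodic {ι : Type} [Fintype ι] [DecidableEq ι] (K M : ℕ) (φ : (ι → ℤ) → ℕ)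
    (h : ∀ x y, φ (x + (M : ℤ) • y) = φ x) :
    bs (K * M) φ = K ^ Fintype.card ι * bs M φ := by
  rw [bs_split]
  simp only [h, bs_const]
  rw [← Finset.mul_sum]; rfl

theorem uniq (K : ℕ) (e D B : ℤ) (hD : Odd D) :
    ∑ t : Fin (2 ^ K), (if (2 ^ K : ℤ) ∣ e + ((t : ℕ) : ℤ) * D + 2 * ((t : ℕ) : ℤ) ^ 2 * B then 1 else 0) = 1 := by
  let F : Fin (2 ^ K) → ZMod (2 ^ K) := fun t =>
    ((e + ((t : ℕ) : ℤ) * D + 2 * ((t : ℕ) : ℤ) ^ 2 * B : ℤ) : ZMod (2 ^ K))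
  have hinj : Function.Injective F := by
    intro s t hst
    have h1 := (ZMod.intCast_eq_intCast_iff_dvd_sub _ _ _).1 hst
    have h2 : (e + ((t : ℕ) : ℤ) * D + 2 * ((t : ℕ) : ℤ) ^ 2 * B) -
        (e + ((s : ℕ) : ℤ) * D + 2 * ((s : ℕ) : ℤ) ^ 2 * B) =
        (((t : ℕ) : ℤ) - ((s : ℕ) : ℤ)) * (D + 2 * (((t : ℕ) : ℤ) + ((s : ℕ) : ℤ)) * B) := by ring
    rw [h2] at h1
    have hc : IsCoprime (((2 ^ K : ℕ)) : ℤ) (D + 2 * (((t : ℕ) : ℤ) + ((s : ℕ) : ℤ)) * B) := by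
      push_cast
      apply IsCoprime.pow_left
      obtain ⟨k, rfl⟩ := hD
      exact ⟨-(k + (((t : ℕ) : ℤ) + ((s : ℕ) : ℤ)) * B), 1, by ring⟩
    have h3 := hc.dvd_of_dvd_mul_right h1
    have h4 : ((t : ℕ) : ℤ) - ((s : ℕ) : ℤ) = 0 := by
      apply Int.eq_zero_of_abs_lt_dvd h3
      rw [abs_lt]
      have := s.2
      have := t.2
      constructor <;> omega
    apply Fin.ext
    omega
  have hbij : Function.Bijective F := by
    rw [Fintype.bijective_iff_injective_and_card]
    exact ⟨hinj, by simp [ZMod.card]⟩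
  have hcond : ∀ t : Fin (2 ^ K), ((2 ^ K : ℤ) ∣ e + ((t : ℕ) : ℤ) * D + 2 * ((t : ℕ) : ℤ) ^ 2 * B) ↔ F t = 0 := by
    intro t
    rw [ZMod.intCast_zmod_eq_zero_iff_dvd]
    push_cast
    rfl
  simp only [hcond]
  obtain ⟨t, ht⟩ := hbij.2 0
  have : ∀ s, F s = 0 ↔ s = t := fun s => ⟨fun h => hinj (h.trans ht.symm), fun h => h ▸ ht⟩
  simp [this]

/-- nonsingular count -/
theorem nonsing {ι : Type} [Fintype ι] [DecidableEq ι] (A : Matrix ι ι ℤ) (b : ι → ℤ) (c : ℤ)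
    (a : ι → ℤ) (i : ι) (hi : Odd (qD A b a i)) (K : ℕ) :
    bs (2 ^ K) (fun y => if (2 ^ (K + 1) : ℤ) ∣ qf A b c (a + (2 : ℤ) • y) then 1 else 0) =
      if (2 : ℤ) ∣ qf A b c a then (2 ^ K) ^ (Fintype.card ι - 1) else 0 := by
  have key : ∀ y, ∃ z, qf A b c (a + (2 : ℤ) • y) = qf A b c a + 2 * z := by
    intro y
    refine ⟨qD A b a ⬝ᵥ y + 2 * (y ⬝ᵥ (A *ᵥ y)), ?_⟩
    rw [qf_add]
    simp only [dotProduct_smul, smul_dotProduct, Matrix.mulVec_smul, smul_eq_mul]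
    ring
  split_ifs with h
  swap
  · rw [bs_congr _ _ (fun _ => 0), bs_const, mul_zero]
    intro y
    rw [if_neg]
    intro h2
    apply h
    obtain ⟨z, hz⟩ := key y
    rw [hz] at h2
    have := (dvd_pow_self (2 : ℤ) (Nat.succ_ne_zero K)).trans h2
    exact (Int.dvd_add_left ⟨z, rfl⟩).1 this
  · unfold bs
    rw [← Equiv.sum_comp (Equiv.funSplitAt i (Fin (2 ^ K))).symm, Fintype.sum_prod_type, Finset.sum_comm]
    rw [Finset.sum_congr rfl (g := fun _ => 1)]
    · simp
    · intro rest _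
      let y' : ι → ℤ := fun j => if h : j = i then 0 else ((rest ⟨j, h⟩ : ℕ) : ℤ)
      have hy : ∀ t : Fin (2 ^ K), (fun j => (((Equiv.funSplitAt i (Fin (2 ^ K))).symm (t, rest) j : ℕ) : ℤ)) =
          y' + (((t : ℕ) : ℤ)) • Pi.single i 1 := by
        intro t
        funext j
        by_cases hj : j = i
        · subst hj
          simp [y', Equiv.funSplitAt, Equiv.piSplitAt]
        · simp [y', hj, Equiv.funSplitAt, Equiv.piSplitAt]
      obtain ⟨z, hz⟩ := key y'
      obtain ⟨e, he⟩ := h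
      have hD : Odd (qD A b (a + (2 : ℤ) • y') i) := by
        have : qD A b (a + (2 : ℤ) • y') i = qD A b a i + 2 * ((A *ᵥ y') i + (Aᵀ *ᵥ y') i) := by
          simp only [qD, Matrix.mulVec_add, Matrix.mulVec_smul, Pi.add_apply, Pi.smul_apply, smul_eq_mul]
          ring
        rw [this]
        exact hi.add_even (even_two_mul _)
      have hu := uniq K (e + z) (qD A b (a + (2 : ℤ) • y') i) (A i i) hD
      refine Eq.trans ?_ hu
      refine Finset.sum_congr rfl fun t _ => ?_
      rw [hy]
      have : qf A b c (a + (2 : ℤ) • (y' + (((t : ℕ) : ℤ)) • Pi.single i 1)) =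
          2 * ((e + z) + ((t : ℕ) : ℤ) * (qD A b (a + (2 : ℤ) • y') i) + 2 * ((t : ℕ) : ℤ) ^ 2 * A i i) := by
        rw [smul_add, ← add_assoc, qf_add, hz, he]
        simp only [dotProduct_smul, smul_dotProduct, Matrix.mulVec_smul, smul_eq_mul,
          Matrix.mulVec_single_one, dotProduct_single_one, single_one_dotProduct, Matrix.col_apply]
        ring
      beta_reduce
      refine if_congr ?_ rfl rfl
      rw [this, pow_succ', mul_dvd_mul_iff_left (by norm_num)]

/-- sign character -/
def sg (x : ZMod 2) : ℤ := if x = 0 then 1 else -1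

theorem sg_add (x y : ZMod 2) : sg (x + y) = sg x * sg y := by
  revert x y; decide

theorem ax_sq {ι : Type} [Fintype ι] [DecidableEq ι] (A : Matrix ι ι (ZMod 2)) (b : ι → ZMod 2) (c : ZMod 2) :
    (2 ^ Fintype.card ι : ℤ) ∣ (∑ x : ι → ZMod 2, sg (c + b ⬝ᵥ x + x ⬝ᵥ (A *ᵥ x))) ^ 2 := by
  rw [sq, Finset.sum_mul_sum]
  have h0 : ∀ x : ι → ZMod 2, ∑ y : ι → ZMod 2,
      sg (c + b ⬝ᵥ x + x ⬝ᵥ (A *ᵥ x)) * sg (c + b ⬝ᵥ y + y ⬝ᵥ (A *ᵥ y)) =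
      ∑ h : ι → ZMod 2, sg (b ⬝ᵥ h + h ⬝ᵥ (A *ᵥ h)) * sg (((A + Aᵀ) *ᵥ h) ⬝ᵥ x) := by
    intro x
    rw [← Equiv.sum_comp (Equiv.addLeft x)]
    refine Finset.sum_congr rfl fun h _ => ?_
    rw [← sg_add, ← sg_add]
    congr 1
    have h1 : (Aᵀ *ᵥ h) ⬝ᵥ x = h ⬝ᵥ (A *ᵥ x) := by
      rw [Matrix.mulVec_transpose, Matrix.dotProduct_mulVec]
    have h2 : (A *ᵥ h) ⬝ᵥ x = x ⬝ᵥ (A *ᵥ h) := dotProduct_comm _ _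
    simp only [Equiv.coe_addLeft, Matrix.mulVec_add, dotProduct_add, add_dotProduct, Matrix.add_mulVec, h1, h2]
    generalize b ⬝ᵥ x = p
    generalize x ⬝ᵥ (A *ᵥ x) = q
    have e1 : c + c = 0 := CharTwo.add_self_eq_zero _
    have e2 : p + p = 0 := CharTwo.add_self_eq_zero _
    have e3 : q + q = 0 := CharTwo.add_self_eq_zero _
    linear_combination e1 + e2 + e3
  rw [Finset.sum_congr rfl fun x _ => h0 x, Finset.sum_comm]
  refine Finset.dvd_sum fun h _ => ?_
  rw [← Finset.mul_sum]
  apply Dvd.dvd.mul_left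
  generalize (A + Aᵀ) *ᵥ h = w
  by_cases hw : w = 0
  · simp [hw, sg]
  · obtain ⟨i, hi⟩ := Function.ne_iff.1 hw
    have hi1 : w i = 1 := by
      have : ∀ t : ZMod 2, t ≠ 0 → t = 1 := by decide
      exact this _ hi
    have : ∑ x : ι → ZMod 2, sg (w ⬝ᵥ x) = - ∑ x : ι → ZMod 2, sg (w ⬝ᵥ x) := by
      conv_lhs => rw [← Equiv.sum_comp (Equiv.addRight (Pi.single i 1))]
      rw [← Finset.sum_neg_distrib]
      refine Finset.sum_congr rfl fun x _ => ?_
      simp only [Equiv.coe_addRight, dotProduct_add, dotProduct_single_one, sg_add, hi1]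
      simp [sg]
    have h0 : ∑ x : ι → ZMod 2, sg (w ⬝ᵥ x) = 0 := by omega
    rw [h0]; exact dvd_zero _

theorem sq_half (m : ℕ) (S : ℤ) (h : (2 ^ m : ℤ) ∣ S ^ 2) : (2 ^ ((m + 1) / 2) : ℤ) ∣ S := by
  obtain ⟨k, hk | hk⟩ := Nat.even_or_odd' m
  · subst hk
    rw [show (2 * k + 1) / 2 = k by omega]
    rw [mul_comm, pow_mul] at h
    exact (Int.pow_dvd_pow_iff (by norm_num)).1 h
  · subst hk
    rw [show (2 * k + 1 + 1) / 2 = k + 1 by omega]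
    have h1 : ((2 ^ k) ^ 2 : ℤ) ∣ S ^ 2 := by
      refine dvd_trans ?_ h
      rw [← pow_mul]
      exact pow_dvd_pow _ (by omega)
    obtain ⟨s, rfl⟩ := (Int.pow_dvd_pow_iff (by norm_num)).1 h1
    rw [pow_succ]
    apply mul_dvd_mul_left
    rw [mul_pow, ← pow_mul, pow_succ, mul_comm 2 k] at h
    have h2 := (mul_dvd_mul_iff_left (by positivity)).1 h
    exact Int.prime_two.dvd_of_dvd_pow h2

theorem ax {ι : Type} [Fintype ι] [DecidableEq ι] (hι : 1 ≤ Fintype.card ι) (A : Matrix ι ι ℤ) (b : ι → ℤ) (c : ℤ) :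
    2 ^ ((Fintype.card ι + 1) / 2 - 1) ∣
      ∑ x : ι → Fin 2, (if (2 : ℤ) ∣ qf A b c (fun i => ((x i : ℕ) : ℤ)) then 1 else 0) := by
  have h := sq_half _ _ (ax_sq (A.map (Int.castRingHom (ZMod 2))) (fun i => (b i : ZMod 2)) (c : ZMod 2))
  have hcast : ∀ x : ι → ZMod 2, ((qf A b c (fun i => (((x i).val : ℕ) : ℤ)) : ℤ) : ZMod 2) =
      (c : ZMod 2) + (fun i => (b i : ZMod 2)) ⬝ᵥ x + x ⬝ᵥ ((A.map (Int.castRingHom (ZMod 2))) *ᵥ x) := by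
    intro x
    have hx : ∀ i, ((((x i).val : ℕ) : ℤ) : ZMod 2) = x i := by
      intro i
      generalize x i = t
      revert t; decide
    simp [qf, dotProduct, Matrix.mulVec]
  have h2 : ((2 * ∑ x : ι → Fin 2, (if (2 : ℤ) ∣ qf A b c (fun i => ((x i : ℕ) : ℤ)) then 1 else 0) : ℕ) : ℤ) =
      2 ^ Fintype.card ι + ∑ x : ι → ZMod 2, sg ((c : ZMod 2) + (fun i => (b i : ZMod 2)) ⬝ᵥ x + x ⬝ᵥ ((A.map (Int.castRingHom (ZMod 2))) *ᵥ x)) := by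
    have : (2 ^ Fintype.card ι : ℤ) = ∑ x : ι → ZMod 2, 1 := by simp
    rw [this, ← Finset.sum_add_distrib]
    push_cast
    rw [Finset.mul_sum]
    change ∑ x : ι → ZMod 2, _ = _
    refine Finset.sum_congr rfl fun x _ => ?_
    rw [← hcast]
    have h3 := ZMod.intCast_zmod_eq_zero_iff_dvd (qf A b c (fun i => (((x i).val : ℕ) : ℤ))) 2
    rw [sg]
    by_cases h4 : (2 : ℤ) ∣ qf A b c (fun i => (((x i).val : ℕ) : ℤ))
    · rw [if_pos (h3.2 h4)]
      erw [if_pos h4]; norm_num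
    · rw [if_neg (fun h => h4 (h3.1 h))]
      erw [if_neg h4]; norm_num
  have h5 : (2 ^ ((Fintype.card ι + 1) / 2) : ℤ) ∣ ((2 * ∑ x : ι → Fin 2, (if (2 : ℤ) ∣ qf A b c (fun i => ((x i : ℕ) : ℤ)) then 1 else 0) : ℕ) : ℤ) := by
    rw [h2]
    exact dvd_add (pow_dvd_pow _ (by omega)) h
  have h6 : 2 ^ ((Fintype.card ι + 1) / 2) ∣ 2 * ∑ x : ι → Fin 2, (if (2 : ℤ) ∣ qf A b c (fun i => ((x i : ℕ) : ℤ)) then 1 else 0) := by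
    exact_mod_cast h5
  have h7 : (Fintype.card ι + 1) / 2 = ((Fintype.card ι + 1) / 2 - 1) + 1 := by omega
  rw [h7, pow_succ'] at h6
  exact Nat.dvd_of_mul_dvd_mul_left (by norm_num) h6

theorem sing {ι : Type} [Fintype ι] (A : Matrix ι ι ℤ) (b : ι → ℤ) (c : ℤ)
    (a : ι → ℤ) (h : ∀ i, ¬ Odd (qD A b a i)) :
    ∃ b' : ι → ℤ, ∀ y c', qf A b c (a + (2 : ℤ) • y) = qf A b c a - 4 * c' + 4 * qf A b' c' y := by
  have h2 : ∀ i, ∃ t, qD A b a i = 2 * t := fun i => (Int.not_odd_iff_even.1 (h i)).two_dvd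
  choose b' hb using h2
  refine ⟨b', fun y c' => ?_⟩
  rw [qf_add, show qD A b a = (2 : ℤ) • b' from funext hb]
  simp only [qf, dotProduct_smul, smul_dotProduct, Matrix.mulVec_smul, smul_eq_mul]
  ring

theorem qf_per {ι : Type} [Fintype ι] (A : Matrix ι ι ℤ) (b : ι → ℤ) (c M : ℤ)
    (x y : ι → ℤ) : M ∣ qf A b c (x + M • y) - qf A b c x := by
  rw [qf_add]
  simp only [dotProduct_smul, smul_dotProduct, Matrix.mulVec_smul, smul_eq_mul]
  exact ⟨qD A b x ⬝ᵥ y + M * (y ⬝ᵥ A *ᵥ y), by ring⟩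

theorem dvd_iff_of_sub {M a b : ℤ} (h : M ∣ a - b) : M ∣ a ↔ M ∣ b := by
  have := dvd_sub_comm.1 h
  constructor
  · intro h1
    have := dvd_add h1 this
    simpa using this
  · intro h1
    have := dvd_add h h1
    simpa using this

theorem lemA (p : ℕ) : ∀ {ι : Type} [Fintype ι] [DecidableEq ι], 2 ≤ Fintype.card ι →
    ∀ (A : Matrix ι ι ℤ) (b : ι → ℤ) (c : ℤ),
    2 ^ ((p * Fintype.card ι + 1) / 2 - 1) ∣
      bs (2 ^ p) (fun x => if (2 ^ p : ℤ) ∣ qf A b c x then 1 else 0) := by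
  induction p using Nat.strong_induction_on with
  | _ p ih =>
  intro ι _ _ hm A b c
  match p, ih with
  | 0, _ => simp
  | 1, _ =>
    have := ax (by omega) A b c
    simpa [bs] using this
  | p + 2, ih =>
    have e1 : 2 ^ (p + 2) = 2 ^ (p + 1) * 2 := by ring
    rw [e1, bs_split]
    refine Finset.dvd_sum fun a _ => ?_
    set a' : ι → ℤ := fun i => ((a i : ℕ) : ℤ)
    by_cases hs : ∃ i, Odd (qD A b a' i)
    · obtain ⟨i, hi⟩ := hs
      have := nonsing A b c a' i hi (p + 1)
      simp only [Nat.cast_ofNat] at this ⊢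
      rw [this]
      split_ifs
      · rw [← pow_mul]
        apply pow_dvd_pow
        obtain ⟨m, hm'⟩ : ∃ m, Fintype.card ι = m + 2 := ⟨Fintype.card ι - 2, by omega⟩
        rw [hm']
        have : (p + 1) * (m + 2 - 1) = p * m + p + m + 1 := by
          rw [show m + 2 - 1 = m + 1 by omega]; ring
        rw [this]
        have : (p + 2) * (m + 2) = p * m + 2 * p + 2 * m + 4 := by ring
        rw [this]
        rcases Nat.eq_zero_or_pos (p * m) with h | h <;> omega
      · exact dvd_zero _
    · push Not at hs
      obtain ⟨b', hb⟩ := sing A b c a' hs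
      by_cases h4 : (4 : ℤ) ∣ qf A b c a'
      · obtain ⟨c', hc⟩ := h4
        have e2 : ∀ y, (if (2 ^ (p + 2) : ℤ) ∣ qf A b c (a' + ((2 : ℕ) : ℤ) • y) then 1 else 0) =
            if (2 ^ p : ℤ) ∣ qf A b' c' y then 1 else 0 := by
          intro y
          refine if_congr ?_ rfl rfl
          have := hb y c'
          rw [hc, sub_self, zero_add] at this
          rw [Nat.cast_ofNat, this, pow_add, mul_comm, show (2 ^ 2 : ℤ) = 4 by norm_num,
            mul_dvd_mul_iff_left (by norm_num)]
        rw [bs_congr _ _ _ e2, pow_succ', bs_periodic]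
        · have := ih p (by omega) hm A b' c'
          refine dvd_trans ?_ (mul_dvd_mul_left _ this)
          rw [← pow_add]
          apply pow_dvd_pow
          rw [add_mul]
          omega
        · intro x y
          refine if_congr ?_ rfl rfl
          apply dvd_iff_of_sub
          push_cast
          exact qf_per _ _ _ _ _ _
      · rw [bs_congr _ _ (fun _ => 0), bs_const, mul_zero]
        · exact dvd_zero _
        intro y
        rw [if_neg]
        intro h
        apply h4
        have h1 := hb y 0
        rw [Nat.cast_ofNat, h1, mul_zero, sub_zero] at h
        have h2 : (4 : ℤ) ∣ 2 ^ (p + 2) := ⟨2 ^ p, by ring⟩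
        exact (Int.dvd_add_left ⟨_, rfl⟩).1 (h2.trans h)

/-- the two-parameter count -/
def cB {ι : Type} [Fintype ι] [DecidableEq ι] (d v : ℕ) (A : Matrix ι ι ℤ) (b : ι → ℤ) (c : ℤ)
    (l : ι → ℤ) (e k : ℤ) : ℕ :=
  bs (2 ^ (d + v)) (fun x => ∑ j : Fin (2 ^ v),
    if (2 ^ (d + v) : ℤ) ∣ qf A b c x + 2 ^ d * ((j : ℕ) : ℤ) * (e + l ⬝ᵥ x) + 4 ^ d * k * ((j : ℕ) : ℤ) ^ 2
    then 1 else 0)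

theorem bs_option {ι : Type} [Fintype ι] [DecidableEq ι] (K : ℕ) (φ : (ι → ℤ) → ℤ → ℕ) :
    bs K (fun x => ∑ j : Fin K, φ x ((j : ℕ) : ℤ)) =
    bs (ι := Option ι) K (fun x => φ (fun i => x (some i)) (x none)) := by
  unfold bs
  rw [← Equiv.sum_comp (Equiv.piOptionEquivProd (β := fun _ : Option ι => Fin K)).symm,
    Fintype.sum_prod_type, Finset.sum_comm]
  rfl

/-- extended quadratic form matrix -/
def extA {ι : Type} (A : Matrix ι ι ℤ) (l : ι → ℤ) (k : ℤ) : Matrix (Option ι) (Option ι) ℤ :=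
  fun i j => match i, j with
    | some i, some j => A i j
    | none, some j => l j
    | some _, none => 0
    | none, none => k

theorem qf_ext {ι : Type} [Fintype ι] (A : Matrix ι ι ℤ) (b : ι → ℤ) (c : ℤ) (l : ι → ℤ) (e k : ℤ)
    (x : Option ι → ℤ) :
    qf (extA A l k) (fun i => i.elim e b) c x =
      qf A b c (fun i => x (some i)) + x none * (e + l ⬝ᵥ (fun i => x (some i))) + k * x none ^ 2 := by
  simp only [qf, dotProduct, Matrix.mulVec, Fintype.sum_option, extA, Option.elim]
  simp only [zero_mul, zero_add]
  ring

theorem lemB (d : ℕ) : ∀ (v : ℕ) {ι : Type} [Fintype ι] [DecidableEq ι], 2 ≤ Fintype.card ι →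
    ∀ (A : Matrix ι ι ℤ) (b : ι → ℤ) (c : ℤ) (l : ι → ℤ) (e k : ℤ),
    2 ^ (((d + v) * Fintype.card ι + min (2 * v) (d + v) + 1) / 2 - 1) ∣ cB d v A b c l e k := by
  induction d with
  | zero =>
    intro v ι _ _ hm A b c l e k
    have h := lemA v (ι := Option ι) (by rw [Fintype.card_option]; omega)
      (extA A l k) (fun i => i.elim e b) c
    simp only [qf_ext] at h
    rw [← bs_option (2 ^ v) (fun x j => if (2 ^ v : ℤ) ∣ qf A b c x + j * (e + l ⬝ᵥ x) + k * j ^ 2 then 1 else 0)] at h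
    rw [Fintype.card_option, mul_add, mul_one] at h
    have e1 : min (2 * v) (0 + v) = v := by omega
    rw [e1]
    simpa [cB] using h
  | succ d ih =>
    intro v ι _ _ hm A b c l e k
    match v with
    | 0 =>
      have h := lemA (d + 1) hm A b c
      simpa [cB] using h
    | v + 1 =>
    unfold cB
    have e1 : 2 ^ (d + 1 + (v + 1)) = 2 ^ (d + v + 1) * 2 := by ring
    rw [e1, bs_split]
    refine Finset.dvd_sum fun a _ => ?_
    set a' : ι → ℤ := fun i => ((a i : ℕ) : ℤ)
    simp only [Nat.cast_ofNat]
    obtain ⟨m, hm'⟩ : ∃ m, Fintype.card ι = m + 2 := ⟨Fintype.card ι - 2, by omega⟩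
    by_cases hs : ∃ i, Odd (qD A b a' i)
    · obtain ⟨i, hi⟩ := hs
      unfold bs
      rw [Finset.sum_comm]
      have e2 : ∀ j : Fin (2 ^ (v + 1)), (∑ y : ι → Fin (2 ^ (d + v + 1)),
          if (2 ^ (d + 1 + (v + 1)) : ℤ) ∣ qf A b c (a' + (2 : ℤ) • (fun i => ((y i : ℕ) : ℤ))) +
            2 ^ (d + 1) * ((j : ℕ) : ℤ) * (e + l ⬝ᵥ (a' + (2 : ℤ) • (fun i => ((y i : ℕ) : ℤ)))) +
            4 ^ (d + 1) * k * ((j : ℕ) : ℤ) ^ 2 then 1 else 0) =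
          if (2 : ℤ) ∣ qf A b c a' then (2 ^ (d + v + 1)) ^ (Fintype.card ι - 1) else 0 := by
        intro j
        have hq : ∀ x, qf A (b + (2 ^ (d + 1) * ((j : ℕ) : ℤ)) • l)
            (c + 2 ^ (d + 1) * ((j : ℕ) : ℤ) * e + 4 ^ (d + 1) * k * ((j : ℕ) : ℤ) ^ 2) x =
            qf A b c x + 2 ^ (d + 1) * ((j : ℕ) : ℤ) * (e + l ⬝ᵥ x) +
              4 ^ (d + 1) * k * ((j : ℕ) : ℤ) ^ 2 := by
          intro x
          simp only [qf, add_dotProduct, smul_dotProduct, smul_eq_mul]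
          ring
        have h := nonsing A (b + (2 ^ (d + 1) * ((j : ℕ) : ℤ)) • l)
            (c + 2 ^ (d + 1) * ((j : ℕ) : ℤ) * e + 4 ^ (d + 1) * k * ((j : ℕ) : ℤ) ^ 2) a' i (by
              have : qD A (b + (2 ^ (d + 1) * ((j : ℕ) : ℤ)) • l) a' i = qD A b a' i + 2 * (2 ^ d * ((j : ℕ) : ℤ) * l i) := by
                simp only [qD, Pi.add_apply, Pi.smul_apply, smul_eq_mul]
                ring
              rw [this]
              exact hi.add_even (even_two_mul _)) (d + v + 1)
        simp only [hq] at h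
        have e3 : d + 1 + (v + 1) = d + v + 1 + 1 := by ring
        rw [e3]
        refine Eq.trans h ?_
        refine if_congr ?_ rfl rfl
        apply dvd_iff_of_sub
        refine ⟨2 ^ d * ((j : ℕ) : ℤ) * (e + l ⬝ᵥ a') + 2 * 4 ^ d * k * ((j : ℕ) : ℤ) ^ 2, ?_⟩
        ring
      rw [Finset.sum_congr rfl fun j _ => e2 j]
      rw [Finset.sum_const, Finset.card_univ, Fintype.card_fin, smul_eq_mul]
      split_ifs
      · rw [← pow_mul, ← pow_add]
        apply pow_dvd_pow
        rw [hm']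
        have h1 : (d + v + 1) * (m + 2 - 1) = (d + v) * m + (d + v) + m + 1 := by
          rw [show m + 2 - 1 = m + 1 by omega]; ring
        have h2 : (d + 1 + (v + 1)) * (m + 2) = (d + v) * m + 2 * (d + v) + 2 * m + 4 := by ring
        rw [h1, h2]
        have := min_le_left (2 * (v + 1)) (d + 1 + (v + 1))
        rcases Nat.eq_zero_or_pos ((d + v) * m) with h | h <;> omega
      · simp
    · push Not at hs
      obtain ⟨b', hb⟩ := sing A b c a' hs
      by_cases hL : Odd (e + l ⬝ᵥ a')
      · -- linear coefficient odd
        have e2 : ∀ y : ι → ℤ, (∑ j : Fin (2 ^ (v + 1)),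
            if (2 ^ (d + 1 + (v + 1)) : ℤ) ∣ qf A b c (a' + (2 : ℤ) • y) +
              2 ^ (d + 1) * ((j : ℕ) : ℤ) * (e + l ⬝ᵥ (a' + (2 : ℤ) • y)) +
              4 ^ (d + 1) * k * ((j : ℕ) : ℤ) ^ 2 then 1 else 0) =
            if (2 ^ (d + 1) : ℤ) ∣ qf A b c (a' + (2 : ℤ) • y) then 1 else 0 := by
          intro y
          split_ifs with h
          · obtain ⟨f, hf⟩ := h
            have hD : Odd (e + l ⬝ᵥ (a' + (2 : ℤ) • y)) := by
              rw [dotProduct_add, dotProduct_smul, ← add_assoc, smul_eq_mul]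
              exact hL.add_even (even_two_mul _)
            refine Eq.trans ?_ (uniq (v + 1) f (e + l ⬝ᵥ (a' + (2 : ℤ) • y)) (2 ^ d * k) hD)
            refine Finset.sum_congr rfl fun j _ => if_congr ?_ rfl rfl
            rw [hf, pow_add 2 (d + 1) (v + 1)]
            have : (2 : ℤ) ^ (d + 1) * f + 2 ^ (d + 1) * ((j : ℕ) : ℤ) * (e + l ⬝ᵥ (a' + (2 : ℤ) • y)) +
                4 ^ (d + 1) * k * ((j : ℕ) : ℤ) ^ 2 = 2 ^ (d + 1) * (f + ((j : ℕ) : ℤ) * (e + l ⬝ᵥ (a' + (2 : ℤ) • y)) +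
                  2 * ((j : ℕ) : ℤ) ^ 2 * (2 ^ d * k)) := by
              rw [show (4 : ℤ) = 2 * 2 by norm_num, mul_pow]
              ring
            rw [this, mul_dvd_mul_iff_left (by positivity)]
          · apply Finset.sum_eq_zero
            intro j _
            rw [if_neg]
            intro h2
            apply h
            have h3 : (2 ^ (d + 1) : ℤ) ∣ 2 ^ (d + 1 + (v + 1)) := pow_dvd_pow _ (by omega)
            refine (dvd_iff_of_sub ?_).1 (h3.trans h2)
            rw [show (4 : ℤ) = 2 * 2 by norm_num, mul_pow]
            exact ⟨((j : ℕ) : ℤ) * (e + l ⬝ᵥ (a' + (2 : ℤ) • y)) + 2 ^ (d + 1) * k * ((j : ℕ) : ℤ) ^ 2, by ring⟩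
        rw [bs_congr _ _ _ e2]
        match d with
        | 0 =>
          have e3 : ∀ y, (if (2 ^ (0 + 1) : ℤ) ∣ qf A b c (a' + (2 : ℤ) • y) then 1 else 0) =
              if (2 : ℤ) ∣ qf A b c a' then 1 else 0 := by
            intro y
            refine if_congr ?_ rfl rfl
            rw [zero_add, pow_one]
            exact dvd_iff_of_sub (qf_per _ _ _ _ _ _)
          rw [bs_congr _ _ _ e3, bs_const, ← pow_mul, hm']
          apply Dvd.dvd.mul_right
          apply pow_dvd_pow
          have h1 : (0 + v + 1) * (m + 2) = v * m + 2 * v + m + 2 := by ring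
          have h2 : (0 + 1 + (v + 1)) * (m + 2) = v * m + 2 * v + 2 * m + 4 := by ring
          rw [h1, h2]
          have := min_le_right (2 * (v + 1)) (0 + 1 + (v + 1))
          rcases Nat.eq_zero_or_pos v with h | h
          · subst h; omega
          · omega
        | d + 1 =>
          by_cases h4 : (4 : ℤ) ∣ qf A b c a'
          · obtain ⟨c', hc⟩ := h4
            have e3 : ∀ y, (if (2 ^ (d + 1 + 1) : ℤ) ∣ qf A b c (a' + (2 : ℤ) • y) then 1 else 0) =
                if (2 ^ d : ℤ) ∣ qf A b' c' y then 1 else 0 := by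
              intro y
              refine if_congr ?_ rfl rfl
              have := hb y c'
              rw [hc, sub_self, zero_add] at this
              rw [this, show (2 : ℤ) ^ (d + 1 + 1) = 4 * 2 ^ d by ring,
                mul_dvd_mul_iff_left (by norm_num)]
            rw [bs_congr _ _ _ e3, show d + 1 + v + 1 = (v + 2) + d by ring, pow_add, bs_periodic]
            · refine dvd_trans ?_ (mul_dvd_mul_left _ (lemA d hm A b' c'))
              rw [← pow_mul, ← pow_add]
              apply pow_dvd_pow
              rw [hm']
              have h1 : (v + 2) * (m + 2) = v * m + 2 * v + 2 * m + 4 := by ring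
              have h2 : (d + 1 + 1 + (v + 1)) * (m + 2) = d * (m + 2) + v * m + 2 * v + 3 * m + 6 := by ring
              rw [h1, h2]
              have := min_le_left (2 * (v + 1)) (d + 1 + 1 + (v + 1))
              omega
            · intro x y
              refine if_congr ?_ rfl rfl
              apply dvd_iff_of_sub
              push_cast
              exact qf_per _ _ _ _ _ _
          · rw [bs_congr _ _ (fun _ => 0), bs_const, mul_zero]
            · exact dvd_zero _
            intro y
            rw [if_neg]
            intro h
            apply h4
            have h1 := hb y 0
            rw [h1, mul_zero, sub_zero] at h
            have h2 : (4 : ℤ) ∣ 2 ^ (d + 1 + 1) := ⟨2 ^ d, by ring⟩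
            exact (Int.dvd_add_left ⟨_, rfl⟩).1 (h2.trans h)
      · obtain ⟨e', he'⟩ := (Int.not_odd_iff_even.1 hL).two_dvd
        have e5 : ∀ (y : ι → ℤ) (j : ℤ) c', qf A b c (a' + (2 : ℤ) • y) +
              2 ^ (d + 1) * j * (e + l ⬝ᵥ (a' + (2 : ℤ) • y)) +
              4 ^ (d + 1) * k * j ^ 2 = qf A b c a' - 4 * c' + 4 * (qf A b' c' y + 2 ^ d * j * (e' + l ⬝ᵥ y) +
              4 ^ d * k * j ^ 2) := by
          intro y j c'
          rw [hb y c', dotProduct_add, dotProduct_smul, ← add_assoc, smul_eq_mul, he']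
          ring
        by_cases h4 : (4 : ℤ) ∣ qf A b c a'
        · obtain ⟨c', hc⟩ := h4
          have e3 : ∀ y : ι → ℤ, (∑ j : Fin (2 ^ (v + 1)),
            if (2 ^ (d + 1 + (v + 1)) : ℤ) ∣ qf A b c (a' + (2 : ℤ) • y) +
              2 ^ (d + 1) * ((j : ℕ) : ℤ) * (e + l ⬝ᵥ (a' + (2 : ℤ) • y)) +
              4 ^ (d + 1) * k * ((j : ℕ) : ℤ) ^ 2 then 1 else 0) =
              2 * ∑ j : Fin (2 ^ v), if (2 ^ (d + v) : ℤ) ∣ qf A b' c' y + 2 ^ d * ((j : ℕ) : ℤ) * (e' + l ⬝ᵥ y) + 4 ^ d * k * ((j : ℕ) : ℤ) ^ 2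
                then 1 else 0 := by
            intro y
            rw [← fin_periodic 2 (2 ^ v) (fun j => if (2 ^ (d + v) : ℤ) ∣ qf A b' c' y + 2 ^ d * j * (e' + l ⬝ᵥ y) + 4 ^ d * k * j ^ 2
                then 1 else 0), ← pow_succ']
            · refine Finset.sum_congr rfl fun j _ => if_congr ?_ rfl rfl
              rw [e5 y _ c', hc, sub_self, zero_add, show (2 : ℤ) ^ (d + 1 + (v + 1)) = 4 * 2 ^ (d + v) by ring,
                mul_dvd_mul_iff_left (by norm_num)]
            · intro x t
              refine if_congr ?_ rfl rfl
              apply dvd_iff_of_sub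
              refine ⟨t * (e' + l ⬝ᵥ y) + 2 ^ d * k * t * (2 * x + 2 ^ v * t), ?_⟩
              push_cast
              rw [show (4 : ℤ) = 2 * 2 by norm_num, mul_pow, pow_add]
              ring
          rw [bs_congr _ _ _ e3, pow_succ', bs_periodic]
          · have h := ih v hm A b' c' l e' k
            have h6 : bs (2 ^ (d + v)) (fun y => 2 * ∑ j : Fin (2 ^ v), if (2 ^ (d + v) : ℤ) ∣ qf A b' c' y + 2 ^ d * ((j : ℕ) : ℤ) * (e' + l ⬝ᵥ y) + 4 ^ d * k * ((j : ℕ) : ℤ) ^ 2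
                then 1 else 0) = 2 * cB d v A b' c' l e' k := by
              unfold cB bs
              rw [Finset.mul_sum]
            rw [h6, ← mul_assoc, ← pow_succ]
            refine dvd_trans ?_ (mul_dvd_mul_left _ h)
            rw [← pow_add]
            apply pow_dvd_pow
            rw [hm']
            have h2 : (d + 1 + (v + 1)) * (m + 2) = (d + v) * (m + 2) + 2 * m + 4 := by ring
            have h3 : min (2 * (v + 1)) (d + 1 + (v + 1)) = min (2 * v) (d + v) + 2 := by omega
            rw [h2, h3]
            omega
          · intro x y
            congr 1
            refine Finset.sum_congr rfl fun j _ => if_congr ?_ rfl rfl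
            apply dvd_iff_of_sub
            push_cast
            obtain ⟨z, hz⟩ := qf_per A b' c' (2 ^ (d + v)) x y
            refine ⟨z + 2 ^ d * ((j : ℕ) : ℤ) * (l ⬝ᵥ y), ?_⟩
            rw [dotProduct_add, dotProduct_smul, smul_eq_mul]
            linear_combination hz
        · rw [bs_congr _ _ (fun _ => 0), bs_const, mul_zero]
          · exact dvd_zero _
          intro y
          apply Finset.sum_eq_zero
          intro j _
          rw [if_neg]
          intro h
          apply h4
          rw [e5 y _ 0, mul_zero, sub_zero] at h
          have h2 : (4 : ℤ) ∣ 2 ^ (d + 1 + (v + 1)) := ⟨2 ^ (d + v), by ring⟩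
          exact (Int.dvd_add_left ⟨_, rfl⟩).1 (h2.trans h)

/-- affine in x and scaled j -/
def IsAffF {ι : Type} [Fintype ι] (R : Type) [CommRing R] (d : ℕ) (F : (ι → ℤ) → ℤ → R) : Prop :=
  ∃ (β : ℤ) (α : ι → ℤ) (γ : ℤ), ∀ x j, F x j = ((β + α ⬝ᵥ x + 2 ^ d * γ * j : ℤ) : R)

/-- quadratic in x and scaled j -/
def IsQuadF {ι : Type} [Fintype ι] (R : Type) [CommRing R] (d : ℕ) (F : (ι → ℤ) → ℤ → R) : Prop :=
  ∃ (A : Matrix ι ι ℤ) (b : ι → ℤ) (c : ℤ) (l : ι → ℤ) (e k : ℤ), ∀ x j,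
    F x j = ((qf A b c x + 2 ^ d * j * (e + l ⬝ᵥ x) + 4 ^ d * k * j ^ 2 : ℤ) : R)

theorem IsQuadF.add {ι : Type} [Fintype ι] {R : Type} [CommRing R] {d : ℕ} {F G : (ι → ℤ) → ℤ → R}
    (hF : IsQuadF R d F) (hG : IsQuadF R d G) : IsQuadF R d (fun x j => F x j + G x j) := by
  obtain ⟨A, b, c, l, e, k, h⟩ := hF
  obtain ⟨A', b', c', l', e', k', h'⟩ := hG
  refine ⟨A + A', b + b', c + c', l + l', e + e', k + k', fun x j => ?_⟩
  beta_reduce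
  rw [h, h', ← Int.cast_add]
  congr 1
  simp only [qf, Matrix.add_mulVec, dotProduct_add, add_dotProduct]
  ring

theorem IsAffF.add {ι : Type} [Fintype ι] {R : Type} [CommRing R] {d : ℕ} {F G : (ι → ℤ) → ℤ → R}
    (hF : IsAffF R d F) (hG : IsAffF R d G) : IsAffF R d (fun x j => F x j + G x j) := by
  obtain ⟨A, b, c, h⟩ := hF
  obtain ⟨A', b', c', h'⟩ := hG
  refine ⟨A + A', b + b', c + c', fun x j => ?_⟩
  beta_reduce
  rw [h, h', ← Int.cast_add]
  congr 1
  simp only [add_dotProduct]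
  ring

theorem IsAffF.mul {ι : Type} [Fintype ι] {R : Type} [CommRing R] {d : ℕ} {F G : (ι → ℤ) → ℤ → R}
    (hF : IsAffF R d F) (hG : IsAffF R d G) : IsQuadF R d (fun x j => F x j * G x j) := by
  obtain ⟨β, α, γ, h⟩ := hF
  obtain ⟨β', α', γ', h'⟩ := hG
  refine ⟨Matrix.vecMulVec α α', β • α' + β' • α, β * β', γ • α' + γ' • α, γ * β' + γ' * β, γ * γ', fun x j => ?_⟩
  beta_reduce
  rw [h, h', ← Int.cast_mul]
  congr 1
  simp only [qf, Matrix.vecMulVec_mulVec, add_dotProduct, smul_dotProduct, smul_eq_mul]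
  have : x ⬝ᵥ (MulOpposite.op (α' ⬝ᵥ x) • α) = (α ⬝ᵥ x) * (α' ⬝ᵥ x) := by
    rw [dotProduct_smul, dotProduct_comm x α]; rfl
  rw [this, show (4 : ℤ) = 2 * 2 by norm_num, mul_pow]
  ring

theorem IsAffF.const {ι : Type} [Fintype ι] {N : ℕ} {d : ℕ} (a : ZMod N) :
    IsAffF (ι := ι) (ZMod N) d (fun _ _ => a) := by
  obtain ⟨z, hz⟩ := ZMod.intCast_surjective a
  exact ⟨z, 0, 0, fun x j => by simp [hz]⟩

theorem IsAffF.quad {ι : Type} [Fintype ι] {N : ℕ} {d : ℕ} {F : (ι → ℤ) → ℤ → ZMod N}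
    (hF : IsAffF (ZMod N) d F) : IsQuadF (ZMod N) d F := by
  have := hF.mul (IsAffF.const (1 : ZMod N))
  simpa using this

theorem IsAffF.smul {ι : Type} [Fintype ι] {N : ℕ} {d : ℕ} {F : (ι → ℤ) → ℤ → ZMod N} (a : ZMod N)
    (hF : IsAffF (ZMod N) d F) : IsAffF (ZMod N) d (fun x j => a * F x j) := by
  obtain ⟨β, α, γ, h⟩ := hF
  obtain ⟨z, hz⟩ := ZMod.intCast_surjective a
  refine ⟨z * β, z • α, z * γ, fun x j => ?_⟩
  beta_reduce
  rw [h, ← hz, ← Int.cast_mul]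
  congr 1
  simp only [smul_dotProduct, smul_eq_mul]
  ring

theorem monom_cases {σ R : Type} [CommRing R] (s : σ →₀ ℕ) (hs : s.sum (fun _ e => e) ≤ 2) :
    (∀ y : σ → R, ∏ i ∈ s.support, y i ^ s i = 1) ∨
    (∃ i, ∀ y : σ → R, ∏ i ∈ s.support, y i ^ s i = y i) ∨
    (∃ i j, 2 ≤ s.sum (fun _ e => e) ∧ ∀ y : σ → R, ∏ i ∈ s.support, y i ^ s i = y i * y j) := by
  classical
  have hc : Multiset.card (Finsupp.toMultiset s) = s.sum (fun _ e => e) := Finsupp.card_toMultiset s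
  have hp : ∀ y : σ → R, ∏ i ∈ s.support, y i ^ s i = ((Finsupp.toMultiset s).map y).prod := by
    intro y
    rw [Finset.prod_multiset_map_count]
    simp
  rw [← hc] at hs ⊢
  have : Multiset.card (Finsupp.toMultiset s) = 0 ∨ Multiset.card (Finsupp.toMultiset s) = 1 ∨
    Multiset.card (Finsupp.toMultiset s) = 2 := by omega
  rcases this with h | h | h
  · left
    intro y
    rw [hp, Multiset.card_eq_zero.1 h]; simp
  · right; left
    obtain ⟨i, hi⟩ := Multiset.card_eq_one.1 h
    exact ⟨i, fun y => by rw [hp, hi]; simp⟩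
  · right; right
    obtain ⟨i, j, hi⟩ := Multiset.card_eq_two.1 h
    exact ⟨i, j, h.ge, fun y => by rw [hp, hi]; simp⟩

theorem isAffF_eval {ι σ : Type} [Fintype ι] {N : ℕ} {d : ℕ} (T : MvPolynomial σ (ZMod N))
    (hT : T.totalDegree ≤ 1) (Y : (ι → ℤ) → ℤ → σ → ZMod N) (hY : ∀ s, IsAffF (ZMod N) d (fun x j => Y x j s)) :
    IsAffF (ZMod N) d (fun x j => MvPolynomial.eval (Y x j) T) := by
  classical
  simp only [MvPolynomial.eval_eq]
  have : ∀ S : Finset (σ →₀ ℕ), S ⊆ T.support → IsAffF (ZMod N) d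
      (fun x j => ∑ s ∈ S, MvPolynomial.coeff s T * ∏ i ∈ s.support, Y x j i ^ s i) := by
    intro S
    induction S using Finset.induction_on with
    | empty => intro _; simpa using IsAffF.const (0 : ZMod N)
    | insert s S hs ih =>
      intro hS
      simp only [Finset.sum_insert hs]
      refine IsAffF.add ?_ (ih fun t ht => hS (Finset.mem_insert_of_mem ht))
      apply IsAffF.smul
      have hd := (MvPolynomial.le_totalDegree (hS (Finset.mem_insert_self s S))).trans hT
      rcases monom_cases (R := ZMod N) s (hd.trans (by norm_num)) with h | ⟨i, h⟩ | ⟨i, j, h2, h⟩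
      · simp only [h]; exact IsAffF.const 1
      · simp only [h]; exact hY i
      · omega
  exact this _ subset_rfl

theorem isQuadF_eval {ι σ : Type} [Fintype ι] {N : ℕ} {d : ℕ} (T : MvPolynomial σ (ZMod N))
    (hT : T.totalDegree ≤ 2) (Y : (ι → ℤ) → ℤ → σ → ZMod N) (hY : ∀ s, IsAffF (ZMod N) d (fun x j => Y x j s)) :
    IsQuadF (ZMod N) d (fun x j => MvPolynomial.eval (Y x j) T) := by
  classical
  simp only [MvPolynomial.eval_eq]
  have : ∀ S : Finset (σ →₀ ℕ), S ⊆ T.support → IsQuadF (ZMod N) d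
      (fun x j => ∑ s ∈ S, MvPolynomial.coeff s T * ∏ i ∈ s.support, Y x j i ^ s i) := by
    intro S
    induction S using Finset.induction_on with
    | empty => intro _; simpa using (IsAffF.const (0 : ZMod N)).quad
    | insert s S hs ih =>
      intro hS
      simp only [Finset.sum_insert hs]
      refine IsQuadF.add ?_ (ih fun t ht => hS (Finset.mem_insert_of_mem ht))
      have hd := (MvPolynomial.le_totalDegree (hS (Finset.mem_insert_self s S))).trans hT
      rcases monom_cases (R := ZMod N) s hd with h | ⟨i, h⟩ | ⟨i, j, h2, h⟩
      · simp only [h]; exact ((IsAffF.const 1).smul _).quad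
      · simp only [h]; exact ((hY i).smul _).quad
      · simp only [h, ← mul_assoc]
        exact IsAffF.mul ((hY i).smul _) (hY j)
  exact this _ subset_rfl

/-- sum over i -/
theorem sum_i (r q : ℕ) (hq : q ≤ r) (w : ℤ) : ∃ a p, a ≤ q ∧ p ≤ r ∧ q + p = a + r ∧
    ∀ Y : ℤ, ∑ i : Fin (2 ^ q), (if (2 ^ r : ℤ) ∣ Y - w * 2 ^ (r - q) * ((i : ℕ) : ℤ) then 1 else 0) =
      2 ^ a * if (2 ^ p : ℤ) ∣ Y then 1 else 0 := by
  by_cases h : (2 ^ q : ℤ) ∣ w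
  · refine ⟨q, r, le_rfl, le_rfl, rfl, fun Y => ?_⟩
    obtain ⟨w', rfl⟩ := h
    have : ∀ i : Fin (2 ^ q), (if (2 ^ r : ℤ) ∣ Y - 2 ^ q * w' * 2 ^ (r - q) * ((i : ℕ) : ℤ) then 1 else 0) =
        if (2 ^ r : ℤ) ∣ Y then 1 else 0 := by
      intro i
      refine if_congr ?_ rfl rfl
      apply dvd_iff_of_sub
      refine ⟨- w' * ((i : ℕ) : ℤ), ?_⟩
      have : (2 : ℤ) ^ r = 2 ^ q * 2 ^ (r - q) := by rw [← pow_add]; congr 1; omega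
      rw [this]; ring
    rw [Finset.sum_congr rfl fun i _ => this i]
    simp
  · have hw : w ≠ 0 := fun h0 => h (h0 ▸ dvd_zero _)
    obtain ⟨a, w', hw', hww⟩ : ∃ a w', Odd w' ∧ w = 2 ^ a * w' := by
      have hf : FiniteMultiplicity (2 : ℤ) w := Int.finiteMultiplicity_iff.2 ⟨by norm_num, hw⟩
      obtain ⟨c, hc, hn⟩ := hf.exists_eq_pow_mul_and_not_dvd
      exact ⟨_, c, by rwa [← Int.not_even_iff_odd, even_iff_two_dvd], hc⟩
    have haq : a < q := by
      by_contra hcon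
      apply h
      rw [hww]
      exact (pow_dvd_pow _ (by omega)).mul_right _
    obtain ⟨b, rfl⟩ : ∃ b, q = a + b := ⟨q - a, by omega⟩
    obtain ⟨s, rfl⟩ : ∃ s, r = a + b + s := ⟨r - (a + b), by omega⟩
    refine ⟨a, a + s, by omega, by omega, by omega, fun Y => ?_⟩
    rw [show a + b + s - (a + b) = s by omega]
    have e1 : (2 : ℕ) ^ (a + b) = 2 ^ a * 2 ^ b := pow_add _ _ _
    rw [e1, fin_periodic (2 ^ a) (2 ^ b) (fun i => if (2 ^ (a + b + s) : ℤ) ∣ Y - w * 2 ^ s * i then 1 else 0)]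
    · congr 1
      split_ifs with hY
      · obtain ⟨f, rfl⟩ := hY
        refine Eq.trans ?_ (uniq b f (-w') 0 hw'.neg)
        refine Finset.sum_congr rfl fun i _ => if_congr ?_ rfl rfl
        rw [show (2 : ℤ) ^ (a + b + s) = 2 ^ (a + s) * 2 ^ b by ring,
          show (2 : ℤ) ^ (a + s) * f - w * 2 ^ s * ((i : ℕ) : ℤ) =
            2 ^ (a + s) * (f + ((i : ℕ) : ℤ) * (-w') + 2 * ((i : ℕ) : ℤ) ^ 2 * 0) by rw [hww]; ring,
          mul_dvd_mul_iff_left (by positivity)]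
      · apply Finset.sum_eq_zero
        intro i _
        rw [if_neg]
        intro h2
        apply hY
        have h3 : (2 ^ (a + s) : ℤ) ∣ 2 ^ (a + b + s) := pow_dvd_pow _ (by omega)
        refine (dvd_iff_of_sub ?_).1 (h3.trans h2)
        exact ⟨- w' * ((i : ℕ) : ℤ), by rw [hww]; ring⟩
    · intro x t
      refine if_congr ?_ rfl rfl
      apply dvd_iff_of_sub
      exact ⟨- w' * t, by rw [hww]; push_cast; ring⟩

theorem lemC (r : ℕ) (hr : 1 ≤ r) {ι : Type} [Fintype ι] [DecidableEq ι] (hm : 2 ≤ Fintype.card ι)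
    (q v : ℕ) (hq : q ≤ r) (hv : v ≤ r) (w : ℤ)
    (A : Matrix ι ι ℤ) (b : ι → ℤ) (c : ℤ) (l : ι → ℤ) (e k : ℤ) :
    2 ^ ((r * Fintype.card ι + min (2 * v) r + 1) / 2 + q - 1) ∣
    ∑ i : Fin (2 ^ q), ∑ j : Fin (2 ^ v), bs (2 ^ r) (fun x =>
      if (2 ^ r : ℤ) ∣ qf A b c x + 2 ^ (r - v) * ((j : ℕ) : ℤ) * (e + l ⬝ᵥ x) +
        4 ^ (r - v) * k * ((j : ℕ) : ℤ) ^ 2 - w * 2 ^ (r - q) * ((i : ℕ) : ℤ) then 1 else 0) := by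
  obtain ⟨a, p, haq, hpr, hqp, hsum⟩ := sum_i r q hq w
  unfold bs
  rw [Finset.sum_comm]
  have e1 : ∀ j : Fin (2 ^ v), (∑ i : Fin (2 ^ q), ∑ x : ι → Fin (2 ^ r),
      if (2 ^ r : ℤ) ∣ qf A b c (fun i => ((x i : ℕ) : ℤ)) +
        2 ^ (r - v) * ((j : ℕ) : ℤ) * (e + l ⬝ᵥ (fun i => ((x i : ℕ) : ℤ))) +
        4 ^ (r - v) * k * ((j : ℕ) : ℤ) ^ 2 - w * 2 ^ (r - q) * ((i : ℕ) : ℤ) then 1 else 0) =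
      2 ^ a * ∑ x : ι → Fin (2 ^ r), 
      if (2 ^ p : ℤ) ∣ qf A b c (fun i => ((x i : ℕ) : ℤ)) +
        2 ^ (r - v) * ((j : ℕ) : ℤ) * (e + l ⬝ᵥ (fun i => ((x i : ℕ) : ℤ))) +
        4 ^ (r - v) * k * ((j : ℕ) : ℤ) ^ 2 then 1 else 0 := by
    intro j
    rw [Finset.sum_comm, Finset.mul_sum]
    exact Finset.sum_congr rfl fun x _ => hsum _
  rw [Finset.sum_congr rfl fun j _ => e1 j, ← Finset.mul_sum, Finset.sum_comm]
  obtain ⟨s, hs⟩ : ∃ s, r = s + p := ⟨r - p, by omega⟩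
  obtain ⟨d, hd⟩ : ∃ d, d + v = r := ⟨r - v, by omega⟩
  rw [show r - v = d by omega]
  obtain ⟨m, hm'⟩ : ∃ m, Fintype.card ι = m := ⟨_, rfl⟩
  have hX : 2 * s ≤ s * m := by rw [mul_comm]; exact Nat.mul_le_mul_left _ (hm' ▸ hm)
  have hrm : r * m = s * m + p * m := by rw [hs, add_mul]
  by_cases hdp : p ≤ d
  · have e2 : ∀ x : ι → ℤ, (∑ j : Fin (2 ^ v), if (2 ^ p : ℤ) ∣ qf A b c x +
        2 ^ d * ((j : ℕ) : ℤ) * (e + l ⬝ᵥ x) + 4 ^ d * k * ((j : ℕ) : ℤ) ^ 2 then 1 else 0) =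
        2 ^ v * if (2 ^ p : ℤ) ∣ qf A b c x then 1 else 0 := by
      intro x
      have : ∀ j : Fin (2 ^ v), (if (2 ^ p : ℤ) ∣ qf A b c x +
        2 ^ d * ((j : ℕ) : ℤ) * (e + l ⬝ᵥ x) + 4 ^ d * k * ((j : ℕ) : ℤ) ^ 2 then 1 else 0) =
        if (2 ^ p : ℤ) ∣ qf A b c x then 1 else 0 := by
        intro j
        refine if_congr ?_ rfl rfl
        apply dvd_iff_of_sub
        obtain ⟨t, rfl⟩ : ∃ t, d = p + t := ⟨d - p, by omega⟩
        rw [show (4 : ℤ) = 2 * 2 by norm_num, mul_pow, pow_add]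
        exact ⟨2 ^ t * ((j : ℕ) : ℤ) * (e + l ⬝ᵥ x) + 2 ^ t * (2 ^ p * 2 ^ t) * k * ((j : ℕ) : ℤ) ^ 2, by ring⟩
      rw [Finset.sum_congr rfl fun i _ => this i]
      simp
    rw [Finset.sum_congr rfl fun x _ => e2 _, ← Finset.mul_sum]
    have e3 := bs_periodic (2 ^ s) (2 ^ p) (fun x => if (2 ^ p : ℤ) ∣ qf A b c x then 1 else 0) (by
      intro x y
      refine if_congr ?_ rfl rfl
      apply dvd_iff_of_sub
      push_cast
      exact qf_per _ _ _ _ _ _)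
    rw [← pow_add, ← hs, bs] at e3
    rw [e3]
    have h := lemA p hm A b c
    refine dvd_trans ?_ (mul_dvd_mul_left _ (mul_dvd_mul_left _ (mul_dvd_mul_left _ h)))
    rw [← pow_mul, ← pow_add, ← pow_add, ← pow_add]
    apply pow_dvd_pow
    rw [hm', hrm]
    have := min_le_left (2 * v) r
    rcases Nat.eq_zero_or_pos p with h0 | h0
    · subst h0
      simp only [zero_mul]
      omega
    · have : 0 < p * m := Nat.mul_pos h0 (by omega)
      omega
  · obtain ⟨v', hv'⟩ : ∃ v', p = d + v' := ⟨p - d, by omega⟩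
    have hvv : v = s + v' := by omega
    have e2 : ∀ x : ι → ℤ, (∑ j : Fin (2 ^ v), if (2 ^ p : ℤ) ∣ qf A b c x +
        2 ^ d * ((j : ℕ) : ℤ) * (e + l ⬝ᵥ x) + 4 ^ d * k * ((j : ℕ) : ℤ) ^ 2 then 1 else 0) =
        2 ^ s * ∑ j : Fin (2 ^ v'), if (2 ^ p : ℤ) ∣ qf A b c x +
        2 ^ d * ((j : ℕ) : ℤ) * (e + l ⬝ᵥ x) + 4 ^ d * k * ((j : ℕ) : ℤ) ^ 2 then 1 else 0 := by
      intro x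
      rw [← fin_periodic (2 ^ s) (2 ^ v') (fun j => if (2 ^ p : ℤ) ∣ qf A b c x +
        2 ^ d * j * (e + l ⬝ᵥ x) + 4 ^ d * k * j ^ 2 then 1 else 0), ← pow_add, ← hvv]
      intro y t
      refine if_congr ?_ rfl rfl
      apply dvd_iff_of_sub
      refine ⟨t * (e + l ⬝ᵥ x) + 2 ^ d * k * t * (2 * y + 2 ^ v' * t), ?_⟩
      push_cast
      rw [hv', show (4 : ℤ) = 2 * 2 by norm_num, mul_pow, pow_add]
      ring
    rw [Finset.sum_congr rfl fun x _ => e2 _, ← Finset.mul_sum]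
    have e3 := bs_periodic (2 ^ s) (2 ^ p) (fun x : ι → ℤ => ∑ j : Fin (2 ^ v'), if (2 ^ p : ℤ) ∣ qf A b c x +
        2 ^ d * ((j : ℕ) : ℤ) * (e + l ⬝ᵥ x) + 4 ^ d * k * ((j : ℕ) : ℤ) ^ 2 then 1 else 0) (by
      intro x y
      refine Finset.sum_congr rfl fun j _ => if_congr ?_ rfl rfl
      apply dvd_iff_of_sub
      push_cast
      obtain ⟨z, hz⟩ := qf_per A b c (2 ^ p) x y
      refine ⟨z + 2 ^ d * ((j : ℕ) : ℤ) * (l ⬝ᵥ y), ?_⟩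
      rw [dotProduct_add, dotProduct_smul, smul_eq_mul]
      linear_combination hz)
    rw [← pow_add, ← hs, bs] at e3
    rw [e3]
    have h := lemB d v' hm A b c l e k
    rw [cB, ← hv'] at h
    refine dvd_trans ?_ (mul_dvd_mul_left _ (mul_dvd_mul_left _ (mul_dvd_mul_left _ h)))
    rw [← pow_mul, ← pow_add, ← pow_add, ← pow_add]
    apply pow_dvd_pow
    rw [hm', hrm]
    have : 0 < p * m := Nat.mul_pos (by omega) (by omega)
    omega


/-- General induction step of the main theorem: if the divisibility statement holds
for all degree-≤2 polynomials in `n-1` variables over `ℤ/2^r`, then it holds for all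
degree-≤2 polynomials in `n` variables, for `n ≥ 4`. -/
theorem stmt_4 (r : ℕ) (hr : 1 ≤ r) (n : ℕ) (hn : 4 ≤ n)
    (IH : ∀ (Q' : MvPolynomial (Fin (n - 1)) (ZMod (2 ^ r))), Q'.totalDegree ≤ 2 →
      ∀ q' v' : ℕ, q' ≤ r → v' ≤ r →
      ∀ k' w' g' u' : ZMod (2 ^ r),
      ∀ T' : MvPolynomial (Fin (n - 2)) (ZMod (2 ^ r)), T'.totalDegree ≤ 1 →
      (2 ^ ((r * (n - 2) + min (2 * v') r + 1) / 2 + q' - 1) : ℕ) ∣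
      ∑ i : Fin (2 ^ q'), ∑ j : Fin (2 ^ v'),
        Nat.card {x : Fin (n - 2) → ZMod (2 ^ r) //
          MvPolynomial.eval
            (fun t : Fin (n - 1) => if h : (t : ℕ) < n - 2 then x ⟨t, h⟩
              else MvPolynomial.eval x T'
                + u' * (2 : ZMod (2 ^ r)) ^ (r - v') * ((j : ℕ) : ZMod (2 ^ r))) Q'
            = k' + w' * (2 : ZMod (2 ^ r)) ^ (r - q') * ((i : ℕ) : ZMod (2 ^ r))
                + g' * (2 : ZMod (2 ^ r)) ^ (r - v') * ((j : ℕ) : ZMod (2 ^ r))})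
    (Q : MvPolynomial (Fin n) (ZMod (2 ^ r))) (hQ : Q.totalDegree ≤ 2)
    (q v : ℕ) (hq : q ≤ r) (hv : v ≤ r)
    (k w g u : ZMod (2 ^ r))
    (T : MvPolynomial (Fin (n - 1)) (ZMod (2 ^ r))) (hT : T.totalDegree ≤ 1) :
    (2 ^ ((r * (n - 1) + min (2 * v) r + 1) / 2 + q - 1) : ℕ) ∣
    ∑ i : Fin (2 ^ q), ∑ j : Fin (2 ^ v),
      Nat.card {x : Fin (n - 1) → ZMod (2 ^ r) //
        MvPolynomial.eval
          (fun t : Fin n => if h : (t : ℕ) < n - 1 then x ⟨t, h⟩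
            else MvPolynomial.eval x T
              + u * (2 : ZMod (2 ^ r)) ^ (r - v) * ((j : ℕ) : ZMod (2 ^ r))) Q
          = k + w * (2 : ZMod (2 ^ r)) ^ (r - q) * ((i : ℕ) : ZMod (2 ^ r))
              + g * (2 : ZMod (2 ^ r)) ^ (r - v) * ((j : ℕ) : ZMod (2 ^ r))} := by
  have hcard : 2 ≤ Fintype.card (Fin (n - 1)) := by rw [Fintype.card_fin]; omega
  have hY : ∀ t : Fin n, IsAffF (ι := Fin (n - 1)) (ZMod (2 ^ r)) (r - v) (fun x j =>
      if h : (t : ℕ) < n - 1 then ((x ⟨t, h⟩ : ℤ) : ZMod (2 ^ r))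
            else MvPolynomial.eval (fun i => ((x i : ℤ) : ZMod (2 ^ r))) T
              + u * (2 : ZMod (2 ^ r)) ^ (r - v) * ((j : ℤ) : ZMod (2 ^ r))) := by
    have hx : ∀ i, IsAffF (ι := Fin (n - 1)) (ZMod (2 ^ r)) (r - v) (fun x _ => ((x i : ℤ) : ZMod (2 ^ r))) :=
      fun i => ⟨0, Pi.single i 1, 0, fun x j => by simp⟩
    intro t
    by_cases h : (t : ℕ) < n - 1
    · simp only [h, dif_pos]
      exact hx _
    · simp only [h, dif_neg, not_false_eq_true]
      refine IsAffF.add (isAffF_eval T hT _ hx) ?_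
      obtain ⟨u', rfl⟩ := ZMod.intCast_surjective u
      exact ⟨0, 0, u', fun x j => by push_cast; simp; ring⟩
  have hF := (isQuadF_eval Q hQ _ hY).add
    (((IsAffF.const (-k)).add (show IsAffF (ZMod (2 ^ r)) (r - v) (fun _ j => -(g * (2 : ZMod (2 ^ r)) ^ (r - v) * ((j : ℤ) : ZMod (2 ^ r)))) by
      obtain ⟨g', rfl⟩ := ZMod.intCast_surjective g
      exact ⟨0, 0, -g', fun x j => by push_cast; simp; ring⟩)).quad)
  obtain ⟨A, b, c, l, e, k', hF⟩ := hF
  obtain ⟨w', hw'⟩ := ZMod.intCast_surjective w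
  have main := lemC r hr hcard q v hq hv w' A b c l e k'
  rw [Fintype.card_fin] at main
  convert main using 3 with i _ j _
  rw [Nat.card_eq_fintype_card, Fintype.card_subtype, Finset.card_filter, bs]
  have hbij : Function.Bijective (fun t : Fin (2 ^ r) => (((t : ℕ) : ℤ) : ZMod (2 ^ r))) := by
    rw [Fintype.bijective_iff_injective_and_card]
    refine ⟨fun s t hst => ?_, by simp [ZMod.card]⟩
    simp only [Int.cast_natCast] at hst
    have h1 := congrArg ZMod.val hst
    rw [ZMod.val_natCast_of_lt s.2, ZMod.val_natCast_of_lt t.2] at h1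
    exact Fin.ext h1
  let E : Fin (2 ^ r) ≃ ZMod (2 ^ r) := Equiv.ofBijective _ hbij
  have hE : ∀ t : Fin (2 ^ r), E t = (((t : ℕ) : ℤ) : ZMod (2 ^ r)) := fun t => rfl
  rw [← Equiv.sum_comp (Equiv.arrowCongr (Equiv.refl (Fin (n - 1))) E)]
  refine Finset.sum_congr rfl fun x _ => if_congr ?_ rfl rfl
  have hx : (Equiv.arrowCongr (Equiv.refl (Fin (n - 1))) E) x = fun i => ((((x i : ℕ) : ℤ)) : ZMod (2 ^ r)) := by
    funext i
    exact hE _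
  rw [hx]
  have h := hF (fun i => ((x i : ℕ) : ℤ)) ((j : ℕ) : ℤ)
  have hz := ZMod.intCast_zmod_eq_zero_iff_dvd (qf A b c (fun i => ((x i : ℕ) : ℤ)) +
    2 ^ (r - v) * ((j : ℕ) : ℤ) * (e + l ⬝ᵥ (fun i => ((x i : ℕ) : ℤ))) +
        4 ^ (r - v) * k' * ((j : ℕ) : ℤ) ^ 2 - w' * 2 ^ (r - q) * ((i : ℕ) : ℤ)) (2 ^ r)
  rw [Nat.cast_pow, Nat.cast_ofNat] at hz
  rw [← hz, Int.cast_sub, ← h, ← hw', ← sub_eq_zero]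
  simp only [Int.cast_natCast]
  push_cast
  constructor
  · intro h0; linear_combination h0
  · intro h0; linear_combination h0
end

section
/- Let r ≥ 1 and let Q be a polynomial of total degree at most 2 in n ≥ 3 variables (x_1, …, x_{n-1}, z) over Z_{2^r}. Then for all natural numbers q ≤ r and v ≤ r and all elements k, w, g, l ∈ Z_{2^r}, the sum Σ_{i=0}^{2^q - 1} Σ_{j=0}^{2^v - 1} #(k + w 2^{r-q} i)_{Q, z = l + g 2^{r-v} j} is divisible by 2^{⌈(r(n-1) + min(2v, r))/2⌉ + q - 1}. -/
open Finset

namespace S6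

lemma fin_split (a b N : ℕ) (h : N = b * a) (f : ℤ → ℕ) :
    ∑ y : Fin N, f (y : ℕ) = ∑ y0 : Fin a, ∑ y1 : Fin b, f ((y0 : ℕ) + (a : ℤ) * (y1 : ℕ)) := by
  subst h
  rw [← finProdFinEquiv.sum_comp, Fintype.sum_prod_type, Finset.sum_comm]
  refine Finset.sum_congr rfl fun y0 _ => Finset.sum_congr rfl fun y1 _ => ?_
  congr 1

lemma fin_red (a b N : ℕ) (h : N = b * a) (f : ℤ → ℕ) (hf : ∀ x y : ℤ, f (x + a * y) = f x) :
    ∑ y : Fin N, f (y : ℕ) = b * ∑ y : Fin a, f (y : ℕ) := by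
  rw [fin_split a b N h, Finset.mul_sum]
  refine Finset.sum_congr rfl fun y0 _ => ?_
  simp [hf]

lemma box_split (m a b N : ℕ) (h : N = b * a) (f : (Fin m → ℤ) → ℕ) :
    ∑ x : Fin m → Fin N, f (fun i => ((x i : ℕ) : ℤ)) =
      ∑ x0 : Fin m → Fin a, ∑ x1 : Fin m → Fin b,
        f (fun i => ((x0 i : ℕ) : ℤ) + (a : ℤ) * ((x1 i : ℕ) : ℤ)) := by
  subst h
  rw [← ((Equiv.arrowProdEquivProdArrow (Fin m) (fun _ => Fin b) (fun _ => Fin a)).symm.trans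
    (Equiv.arrowCongr (Equiv.refl _) finProdFinEquiv)).sum_comp, Fintype.sum_prod_type,
    Finset.sum_comm]
  refine Finset.sum_congr rfl fun y0 _ => Finset.sum_congr rfl fun y1 _ => ?_
  congr 1

lemma box_red (m a b N : ℕ) (h : N = b * a) (f : (Fin m → ℤ) → ℕ)
    (hf : ∀ x y : Fin m → ℤ, f (fun i => x i + a * y i) = f x) :
    ∑ x : Fin m → Fin N, f (fun i => ((x i : ℕ) : ℤ)) =
      b ^ m * ∑ x : Fin m → Fin a, f (fun i => ((x i : ℕ) : ℤ)) := by
  rw [box_split m a b N h, Finset.mul_sum]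
  refine Finset.sum_congr rfl fun y0 _ => ?_
  have : ∀ x1 : Fin m → Fin b, f (fun i => ((y0 i : ℕ) : ℤ) + (a : ℤ) * ((x1 i : ℕ) : ℤ))
      = f (fun i => ((y0 i : ℕ) : ℤ)) := fun x1 =>
    hf (fun i => ((y0 i : ℕ) : ℤ)) (fun i => ((x1 i : ℕ) : ℤ))
  simp [this]

lemma solve1 (r : ℕ) (g : ℤ → ℤ) (hg : ∀ t t', ∃ u, g t - g t' = (t - t') * (2 * u + 1)) :
    ∑ t : Fin (2 ^ r), (if (2 : ℤ) ^ r ∣ g (t : ℕ) then 1 else 0) = 1 := by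
  have hinj : Function.Injective (fun t : Fin (2 ^ r) => ((g (t : ℕ) : ℤ) : ZMod (2 ^ r))) := by
    intro t t' h
    have h1 : ((2 ^ r : ℕ) : ℤ) ∣ g (t : ℕ) - g (t' : ℕ) := by
      rw [← ZMod.intCast_zmod_eq_zero_iff_dvd]
      simpa [sub_eq_zero] using h
    obtain ⟨u, hu⟩ := hg (t : ℕ) (t' : ℕ)
    rw [hu] at h1
    have hc : IsCoprime (((2 ^ r : ℕ) : ℤ)) (2 * u + 1) := by
      push_cast
      apply IsCoprime.pow_left
      exact ⟨-u, 1, by ring⟩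
    have h2 := hc.dvd_of_dvd_mul_right h1
    have h3 : ((t : ℕ) : ℤ) - (t' : ℕ) = 0 := by
      apply Int.eq_zero_of_abs_lt_dvd h2
      have := t.2; have := t'.2
      rw [abs_lt]; constructor <;> omega
    ext; omega
  have hbij := (Fintype.bijective_iff_injective_and_card _).2 ⟨hinj, by simp [ZMod.card]⟩
  obtain ⟨t, ht, hu⟩ := hbij.existsUnique 0
  have key : ∀ t : Fin (2 ^ r), ((2 : ℤ) ^ r ∣ g (t : ℕ)) ↔ ((g (t : ℕ) : ℤ) : ZMod (2 ^ r)) = 0 := by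
    intro t
    rw [ZMod.intCast_zmod_eq_zero_iff_dvd]; push_cast; rfl
  rw [Finset.sum_eq_single t]
  · simp [(key t).2 ht]
  · intro t' _ hne
    have : ¬ ((2 : ℤ) ^ r ∣ g (t' : ℕ)) := fun h => hne (hu t' ((key t').1 h))
    simp [this]
  · simp

lemma hensel (m r : ℕ) (i : Fin (m + 1)) (f : (Fin (m + 1) → ℤ) → ℤ)
    (hf : ∀ x t t', ∃ u, f (Function.update x i t) - f (Function.update x i t')
      = (t - t') * (2 * u + 1)) :
    ∑ x : Fin (m + 1) → Fin (2 ^ r), (if (2 : ℤ) ^ r ∣ f (fun i => ((x i : ℕ) : ℤ)) then 1 else 0)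
      = 2 ^ (r * m) := by
  rw [← (Fin.insertNthEquiv (fun _ => Fin (2 ^ r)) i).sum_comp, Fintype.sum_prod_type,
    Finset.sum_comm]
  have key : ∀ z : Fin m → Fin (2 ^ r), ∑ t : Fin (2 ^ r),
      (if (2 : ℤ) ^ r ∣ f (fun k => (((Fin.insertNthEquiv (fun _ => Fin (2 ^ r)) i (t, z)) k : ℕ) : ℤ))
        then 1 else 0) = 1 := by
    intro z
    have := solve1 r (fun t => f (Function.update
      (i.insertNth (0 : ℤ) (fun k => ((z k : ℕ) : ℤ)) : Fin (m + 1) → ℤ) i t)) (fun t t' => hf _ t t')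
    refine Eq.trans ?_ this
    refine Finset.sum_congr rfl fun t _ => ?_
    have : (fun k => (((Fin.insertNthEquiv (fun _ => Fin (2 ^ r)) i (t, z)) k : ℕ) : ℤ)) =
      Function.update
      (i.insertNth (0 : ℤ) (fun k => ((z k : ℕ) : ℤ)) : Fin (m + 1) → ℤ) i (t : ℕ) := by
      funext k
      refine Fin.succAboveCases i ?_ (fun k => ?_) k
      · simp
      · simp
    rw [this]
  simp only [key]
  simp [← pow_mul]

def IsQuad {m : ℕ} (A : (Fin m → ℤ) → ℤ) : Prop :=
  ∃ (c : ℤ) (b : Fin m → ℤ) (M : Fin m → Fin m → ℤ), ∀ x,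
    A x = c + ∑ i, b i * x i + ∑ i, ∑ j, M i j * (x i * x j)

lemma IsQuad.congr {m : ℕ} {A : (Fin m → ℤ) → ℤ} (hA : IsQuad A) (d : ℤ) (X Y : Fin m → ℤ)
    (h : ∀ k, X k ≡ Y k [ZMOD d]) : A X ≡ A Y [ZMOD d] := by
  obtain ⟨c, b, M, hA⟩ := hA
  rw [hA, hA]
  have hs : ∀ (f g : Fin m → ℤ), (∀ i, f i ≡ g i [ZMOD d]) → ∑ i, f i ≡ ∑ i, g i [ZMOD d] := by
    intro f g hfg
    rw [Int.modEq_iff_dvd, ← Finset.sum_sub_distrib]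
    exact Finset.dvd_sum fun i _ => (Int.modEq_iff_dvd.1 (hfg i))
  refine Int.ModEq.add (Int.ModEq.add rfl (hs _ _ fun i => ?_)) (hs _ _ fun i => hs _ _ fun j => ?_)
  · exact (h i).mul_left _
  · exact ((h i).mul (h j)).mul_left _

lemma IsQuad.shift {m : ℕ} {A : (Fin m → ℤ) → ℤ} (hA : IsQuad A) (x0 : Fin m → ℤ) :
    ∃ (h : Fin m → ℤ) (M : Fin m → Fin m → ℤ), ∀ x : Fin m → ℤ,
      A (fun i => x0 i + 2 * x i) = A x0 + 2 * ∑ i, h i * x i +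
        4 * ∑ i, ∑ j, M i j * (x i * x j) := by
  obtain ⟨c, b, M, hA⟩ := hA
  refine ⟨fun i => b i + ∑ j, M i j * x0 j + ∑ j, M j i * x0 j, M, fun x => ?_⟩
  rw [hA, hA]
  have e1 : ∑ i, b i * (x0 i + 2 * x i) = ∑ i, b i * x0 i + 2 * ∑ i, b i * x i := by
    rw [Finset.mul_sum, ← Finset.sum_add_distrib]
    exact Finset.sum_congr rfl fun i _ => by ring
  have e2 : ∑ i, ∑ j, M i j * ((x0 i + 2 * x i) * (x0 j + 2 * x j)) =
      ∑ i, ∑ j, M i j * (x0 i * x0 j) + 2 * ∑ i, ∑ j, M i j * x0 j * x i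
       + 2 * ∑ i, ∑ j, M j i * x0 j * x i + 4 * ∑ i, ∑ j, M i j * (x i * x j) := by
    have : ∑ i, ∑ j, M j i * x0 j * x i = ∑ i, ∑ j, M i j * x0 i * x j := Finset.sum_comm
    rw [this]
    simp only [Finset.mul_sum, ← Finset.sum_add_distrib]
    exact Finset.sum_congr rfl fun i _ => Finset.sum_congr rfl fun j _ => by ring
  have e3 : ∑ i, (b i + ∑ j, M i j * x0 j + ∑ j, M j i * x0 j) * x i
     = ∑ i, b i * x i + ∑ i, ∑ j, M i j * x0 j * x i + ∑ i, ∑ j, M j i * x0 j * x i := by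
    simp only [add_mul, Finset.sum_add_distrib, Finset.sum_mul]
  rw [e1, e2, e3]
  ring

lemma hensel_quad (m r : ℕ) (h : Fin (m + 1) → ℤ) (i : Fin (m + 1)) (hi : ¬ 2 ∣ h i) (a : ℤ)
    (q : (Fin (m + 1) → ℤ) → ℤ) (hq : IsQuad q) (f : (Fin (m + 1) → ℤ) → ℤ)
    (hf : ∀ x, f x = a + ∑ i, h i * x i + 2 * q x) :
    ∑ x : Fin (m + 1) → Fin (2 ^ r), (if (2 : ℤ) ^ r ∣ f (fun i => ((x i : ℕ) : ℤ)) then 1 else 0)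
      = 2 ^ (r * m) := by
  apply hensel m r i
  intro x t t'
  have h1 : (t - t') ∣ q (Function.update x i t) - q (Function.update x i t') := by
    rw [← Int.modEq_iff_dvd]
    apply hq.congr
    intro k
    by_cases hk : k = i
    · subst hk; simp [Int.modEq_iff_dvd]
    · simp [hk]
  obtain ⟨w, hw⟩ := h1
  have h2 : ∑ k, h k * Function.update x i t k - ∑ k, h k * Function.update x i t' k
      = h i * (t - t') := by
    rw [← Finset.sum_sub_distrib, Finset.sum_eq_single i]
    · simp; ring
    · intro k _ hk; simp [hk]
    · simp
  refine ⟨h i / 2 + w, ?_⟩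
  have h3 : h i = 2 * (h i / 2) + 1 := by omega
  rw [hf, hf]
  rw [show (t - t') * (2 * (h i / 2 + w) + 1) = (2 * (h i / 2) + 1) * (t - t') + 2 * ((t - t') * w) by ring,
    ← h3, ← hw, ← h2]
  ring

def chi (a : ZMod 2) : ℤ := if a = 0 then 1 else -1

lemma chi_add : ∀ a b, chi (a + b) = chi a * chi b := by decide

lemma chi_sum {ι : Type*} (s : Finset ι) (f : ι → ZMod 2) :
    chi (∑ i ∈ s, f i) = ∏ i ∈ s, chi (f i) := by
  classical
  induction s using Finset.induction_on with
  | empty => simp [chi]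
  | insert a s ha ih => rw [Finset.sum_insert ha, Finset.prod_insert ha, chi_add, ih]

lemma affine_sum (M : ℕ) (a : ZMod 2) (l : Fin M → ZMod 2) :
    (2 : ℤ) ^ M ∣ ∑ x : Fin M → ZMod 2, chi (a + ∑ i, l i * x i) := by
  have h2 : ∀ l : ZMod 2, (2 : ℤ) ∣ ∑ t : ZMod 2, chi (l * t) := by decide
  have : ∑ x : Fin M → ZMod 2, chi (a + ∑ i, l i * x i) = chi a * ∏ i, ∑ t : ZMod 2, chi (l i * t) := by
    rw [Finset.prod_univ_sum, Finset.mul_sum, Fintype.piFinset_univ]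
    refine Finset.sum_congr rfl fun x _ => ?_
    rw [chi_add, chi_sum]
  rw [this]
  apply Dvd.dvd.mul_left
  have := Finset.prod_dvd_prod_of_dvd (s := (Finset.univ : Finset (Fin M))) (fun _ => (2 : ℤ)) (fun i => ∑ t : ZMod 2, chi (l i * t))
    (fun i _ => h2 (l i))
  simpa using this

lemma ax_zmod (M : ℕ) (f : (Fin M → ZMod 2) → ZMod 2) (c : ZMod 2) (b : Fin M → ZMod 2)
    (N : Fin M → Fin M → ZMod 2)
    (hf : ∀ x, f x = c + ∑ i, b i * x i + ∑ i, ∑ j, N i j * (x i * x j)) :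
    (2 : ℤ) ^ M ∣ (∑ x, chi (f x)) ^ 2 := by
  have h1 : (∑ x, chi (f x)) ^ 2 = ∑ u : Fin M → ZMod 2, ∑ x : Fin M → ZMod 2,
      chi (f x + f (x + u)) := by
    rw [sq, Finset.sum_mul_sum]
    rw [Finset.sum_comm (f := fun u x => chi (f x + f (x + u)))]
    refine Finset.sum_congr rfl fun x _ => ?_
    rw [← Equiv.sum_comp (Equiv.addLeft x)]
    refine Finset.sum_congr rfl fun u _ => ?_
    rw [chi_add]; rfl
  rw [h1]
  refine Finset.dvd_sum fun u _ => ?_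
  have h2 : ∀ x, f x + f (x + u) = (f u - c) + ∑ i, (∑ j, N i j * u j + ∑ j, N j i * u j) * x i := by
    intro x
    have e1 : ∑ i, b i * ((x + u) i) = ∑ i, b i * x i + ∑ i, b i * u i := by
      rw [← Finset.sum_add_distrib]
      exact Finset.sum_congr rfl fun i _ => by simp; ring
    have e2 : ∑ i, ∑ j, N i j * ((x + u) i * (x + u) j) =
        ∑ i, ∑ j, N i j * (x i * x j) + ∑ i, ∑ j, N i j * u j * x i
         + ∑ i, ∑ j, N j i * u j * x i + ∑ i, ∑ j, N i j * (u i * u j) := by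
      have : ∑ i, ∑ j, N j i * u j * x i = ∑ i, ∑ j, N i j * u i * x j := Finset.sum_comm
      rw [this]
      simp only [← Finset.sum_add_distrib]
      exact Finset.sum_congr rfl fun i _ => Finset.sum_congr rfl fun j _ => by simp; ring
    have e3 : ∑ i, (∑ j, N i j * u j + ∑ j, N j i * u j) * x i
       = ∑ i, ∑ j, N i j * u j * x i + ∑ i, ∑ j, N j i * u j * x i := by
      simp only [add_mul, Finset.sum_add_distrib, Finset.sum_mul]
    rw [hf, hf, hf, e1, e2, e3]
    have h22 : (2 : ZMod 2) = 0 := by decide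
    linear_combination (c + ∑ i, b i * x i + ∑ i, ∑ j, N i j * (x i * x j)) * h22
  simp only [h2]
  exact affine_sum M _ _

lemma ax (M E : ℕ) (hE : 2 * E + 1 ≤ M) (A : (Fin M → ℤ) → ℤ) (hA : IsQuad A) :
    2 ^ E ∣ ∑ x : Fin M → Fin (2 ^ 1), (if (2 : ℤ) ^ 1 ∣ A (fun i => ((x i : ℕ) : ℤ)) then 1 else 0) := by
  obtain ⟨c, b, N, hA⟩ := hA
  set f : (Fin M → ZMod 2) → ZMod 2 := fun x => (c : ZMod 2) + ∑ i, (b i : ZMod 2) * x i +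
    ∑ i, ∑ j, (N i j : ZMod 2) * (x i * x j) with hf
  have hc : ∀ t : ZMod 2, (((t.val : ℕ) : ℤ) : ZMod 2) = t := by decide
  have key : ∀ x : Fin M → ZMod 2, ((2 : ℤ) ^ 1 ∣ A (fun i => ((x i).val : ℤ))) ↔ f x = 0 := by
    intro x
    rw [pow_one, show (2 : ℤ) = ((2 : ℕ) : ℤ) by rfl, ← ZMod.intCast_zmod_eq_zero_iff_dvd, hA]
    have : ((c + ∑ i, b i * ((x i).val : ℤ) + ∑ i, ∑ j, N i j * (((x i).val : ℤ) * ((x j).val : ℤ)) : ℤ) : ZMod 2) = f x := by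
      rw [hf]
      push_cast
      simp only [ZMod.natCast_val, ZMod.cast_id', id_eq]
    rw [this]
  have h1 := ax_zmod M f c (fun i => b i) (fun i j => N i j) (fun x => rfl)
  have h2 : (2 : ℤ) ^ (E + 1) ∣ ∑ x, chi (f x) := by
    by_contra hcon
    have h3 : (2 : ℤ) ^ (2 * E + 1) ∣ (∑ x, chi (f x)) ^ 2 := (pow_dvd_pow _ hE).trans h1
    by_cases h0 : (∑ x, chi (f x)) = 0
    · rw [h0] at hcon; simp at hcon
    have hp : Prime (2 : ℤ) := Int.prime_two
    have hfin : FiniteMultiplicity (2 : ℤ) (∑ x, chi (f x)) :=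
      Int.finiteMultiplicity_iff.2 ⟨by decide, h0⟩
    have hfin2 : FiniteMultiplicity (2 : ℤ) ((∑ x, chi (f x)) ^ 2) := hfin.pow hp
    rw [hfin2.pow_dvd_iff_le_multiplicity, hfin.multiplicity_pow hp] at h3
    rw [hfin.pow_dvd_iff_le_multiplicity] at hcon
    omega
  have h3 : ∑ x : Fin M → Fin (2 ^ 1), (if (2 : ℤ) ^ 1 ∣ A (fun i => ((x i : ℕ) : ℤ)) then 1 else 0)
     = ∑ x : Fin M → ZMod 2, (if f x = 0 then 1 else 0 : ℕ) := by
    change ∑ x : Fin M → ZMod 2, (if (2 : ℤ) ^ 1 ∣ A (fun i => ((x i).val : ℤ)) then 1 else 0) = _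
    refine Finset.sum_congr rfl fun x _ => ?_
    simp only [key]
  rw [h3]
  have h4 : (2 : ℤ) * ((∑ x : Fin M → ZMod 2, (if f x = 0 then 1 else 0 : ℕ) : ℕ) : ℤ) =
      2 ^ M + ∑ x, chi (f x) := by
    have : (2 : ℤ) ^ M = ∑ x : Fin M → ZMod 2, (1 : ℤ) := by simp [ZMod.card]
    rw [this, ← Finset.sum_add_distrib]
    push_cast
    rw [Finset.mul_sum]
    refine Finset.sum_congr rfl fun x _ => ?_
    unfold chi
    split_ifs <;> norm_num
  have h5 : (2 : ℤ) ^ (E + 1) ∣ 2 * ((∑ x : Fin M → ZMod 2, (if f x = 0 then 1 else 0 : ℕ) : ℕ) : ℤ) := by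
    rw [h4]
    exact dvd_add (pow_dvd_pow _ (by omega)) h2
  rw [pow_succ'] at h5
  have h6 := Int.dvd_of_mul_dvd_mul_left (by decide) h5
  exact_mod_cast h6

lemma ax2 (m E : ℕ) (hE : 2 * E ≤ m) (A : (Fin m → ℤ) → ℤ) (hA : IsQuad A) (L0 : ℤ)
    (b : Fin m → ℤ) :
    2 ^ E ∣ ∑ x : Fin m → Fin (2 ^ 1), ∑ y : Fin (2 ^ 1),
      (if (2 : ℤ) ^ 1 ∣ A (fun i => ((x i : ℕ) : ℤ)) +
        ((y : ℕ) : ℤ) * (L0 + ∑ i, b i * ((x i : ℕ) : ℤ)) then 1 else 0) := by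
  have hq : IsQuad (fun X : Fin (m + 1) → ℤ => A (fun i => X i.succ) +
      X 0 * (L0 + ∑ i, b i * X (Fin.succ i))) := by
    obtain ⟨c, b', N, hA⟩ := hA
    refine ⟨c, Fin.cons L0 b', Fin.cons (Fin.cons 0 b) (fun i => Fin.cons 0 (N i)), fun X => ?_⟩
    simp only [hA, Fin.sum_univ_succ, Fin.cons_zero, Fin.cons_succ, Finset.sum_add_distrib]
    simp only [mul_add, Finset.mul_sum]
    have : ∑ i, X 0 * (b i * X (Fin.succ i)) = ∑ i, b i * (X 0 * X (Fin.succ i)) :=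
      Finset.sum_congr rfl fun i _ => by ring
    rw [this]
    simp
    ring
  have := ax (m + 1) E (by omega) _ hq
  rw [← (Fin.consEquiv (fun _ => Fin (2 ^ 1))).sum_comp, Fintype.sum_prod_type,
    Finset.sum_comm] at this
  simpa [Fin.consEquiv] using this

def cnt {m : ℕ} (R r v : ℕ) (F : (Fin m → ℤ) → ℤ → ℤ) : ℕ :=
  ∑ x : Fin m → Fin (2 ^ R), ∑ y : Fin (2 ^ v),
    if (2 : ℤ) ^ r ∣ F (fun i => ((x i : ℕ) : ℤ)) ((y : ℕ) : ℤ) then 1 else 0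

lemma cnt_congr {m R r v : ℕ} {F G : (Fin m → ℤ) → ℤ → ℤ}
    (h : ∀ x y, (2 : ℤ) ^ r ∣ F x y ↔ (2 : ℤ) ^ r ∣ G x y) : cnt R r v F = cnt R r v G := by
  unfold cnt
  simp only [h]

lemma cnt_split {m R r v : ℕ} (F : (Fin m → ℤ) → ℤ → ℤ) :
    cnt (R + 1) r v F = ∑ x0 : Fin m → Fin 2,
      cnt R r v (fun x y => F (fun i => ((x0 i : ℕ) : ℤ) + 2 * x i) y) := by
  unfold cnt
  rw [box_split m 2 (2 ^ R) (2 ^ (R + 1)) (pow_succ _ _)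
    (fun x => ∑ y : Fin (2 ^ v), if (2 : ℤ) ^ r ∣ F x ((y : ℕ) : ℤ) then 1 else 0)]
  rfl

lemma cnt_split_y {m R r v t : ℕ} (F : (Fin m → ℤ) → ℤ → ℤ) :
    cnt R r (v + t) F = ∑ y0 : Fin (2 ^ t),
      cnt R r v (fun x y => F x (((y0 : ℕ) : ℤ) + 2 ^ t * y)) := by
  unfold cnt
  symm
  rw [Finset.sum_comm]
  symm
  refine Finset.sum_congr rfl fun x _ => ?_
  rw [fin_split (2 ^ t) (2 ^ v) (2 ^ (v + t)) (pow_add _ _ _)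
    (fun y => if (2 : ℤ) ^ r ∣ F (fun i => ((x i : ℕ) : ℤ)) y then 1 else 0)]
  push_cast
  rfl

lemma cnt_half {m R r v : ℕ} {F G : (Fin m → ℤ) → ℤ → ℤ}
    (h : ∀ x y, F x y = 2 * G x y) : cnt R (r + 1) v F = cnt R r v G := by
  unfold cnt
  refine Finset.sum_congr rfl fun x _ => Finset.sum_congr rfl fun y _ => ?_
  refine if_congr ?_ rfl rfl
  rw [h, pow_succ', Int.mul_dvd_mul_iff_left (by decide)]

lemma cnt_zero {m R r v : ℕ} {F : (Fin m → ℤ) → ℤ → ℤ}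
    (h : ∀ x y, ¬ 2 ∣ F x y) : cnt R (r + 1) v F = 0 := by
  unfold cnt
  refine Finset.sum_eq_zero fun x _ => Finset.sum_eq_zero fun y _ => ?_
  rw [if_neg]
  exact fun hd => h _ _ ((dvd_pow_self 2 (by omega)).trans hd)

lemma dvd_iff_of_modEq {d a b : ℤ} (h : a ≡ b [ZMOD d]) : d ∣ a ↔ d ∣ b := by
  rw [← Int.modEq_zero_iff_dvd, ← Int.modEq_zero_iff_dvd]
  exact ⟨fun h' => h.symm.trans h', fun h' => h.trans h'⟩

lemma cnt_red_x {m r v t : ℕ} (F : (Fin m → ℤ) → ℤ → ℤ)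
    (h : ∀ x x' y, (∀ i, x i ≡ x' i [ZMOD 2 ^ r]) → F x y ≡ F x' y [ZMOD 2 ^ r]) :
    cnt (r + t) r v F = 2 ^ (t * m) * cnt r r v F := by
  unfold cnt
  rw [box_red m (2 ^ r) (2 ^ t) (2 ^ (r + t)) (by ring)
    (fun x => ∑ y : Fin (2 ^ v), if (2 : ℤ) ^ r ∣ F x ((y : ℕ) : ℤ) then 1 else 0), pow_mul]
  intro x x'
  refine Finset.sum_congr rfl fun y _ => ?_
  have := dvd_iff_of_modEq (h (fun i => x i + ((2 ^ r : ℕ) : ℤ) * x' i) x (y : ℕ) (fun i => by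
    simp [Int.modEq_iff_dvd]))
  simp only [this]

lemma cnt_red_y {m R r v t : ℕ} (F : (Fin m → ℤ) → ℤ → ℤ)
    (h : ∀ x y y', y ≡ y' [ZMOD 2 ^ v] → F x y ≡ F x y' [ZMOD 2 ^ r]) :
    cnt R r (v + t) F = 2 ^ t * cnt R r v F := by
  unfold cnt
  rw [Finset.mul_sum]
  refine Finset.sum_congr rfl fun x _ => ?_
  rw [fin_red (2 ^ v) (2 ^ t) (2 ^ (v + t)) (by ring)
    (fun y => if (2 : ℤ) ^ r ∣ F (fun i => ((x i : ℕ) : ℤ)) y then 1 else 0)]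
  intro y y'
  have := dvd_iff_of_modEq (h (fun i => ((x i : ℕ) : ℤ)) (y + ((2 ^ v : ℕ) : ℤ) * y') y (by
    simp [Int.modEq_iff_dvd]))
  simp only [this]

lemma dvd_aux {E a X : ℕ} (h : 2 ^ (E - a) ∣ X) : 2 ^ E ∣ 2 ^ a * X := by
  refine (pow_dvd_pow 2 (show E ≤ a + (E - a) by omega)).trans ?_
  rw [pow_add]
  exact Nat.mul_dvd_mul_left _ h

/-- solving for `y` -/
lemma cnt_solve_y {m R r t : ℕ} (F : (Fin m → ℤ) → ℤ → ℤ) (a l : (Fin m → ℤ) → ℤ)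
    (hF : ∀ x y, F x y = a x + y * l x) (hl : ∀ x, ¬ 2 ∣ l x) :
    cnt R r (r + t) F = 2 ^ (t + R * m) := by
  rw [cnt_red_y F (fun x y y' h => by rw [hF, hF]; exact Int.ModEq.add rfl (h.mul_right _))]
  have : cnt R r r F = 2 ^ (R * m) := by
    unfold cnt
    have : ∀ x : Fin m → Fin (2 ^ R), (∑ y : Fin (2 ^ r),
      if (2 : ℤ) ^ r ∣ F (fun i => ((x i : ℕ) : ℤ)) ((y : ℕ) : ℤ) then 1 else 0) = 1 := by
      intro x
      apply solve1 r (fun y => F (fun i => ((x i : ℕ) : ℤ)) y)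
      intro t t'
      refine ⟨l (fun i => ((x i : ℕ) : ℤ)) / 2, ?_⟩
      have h1 := hl (fun i => ((x i : ℕ) : ℤ))
      have h2 : 2 * (l (fun i => ((x i : ℕ) : ℤ)) / 2) + 1 = l (fun i => ((x i : ℕ) : ℤ)) := by omega
      rw [h2, hF, hF]; ring
    simp only [this]
    simp [← pow_mul]
  rw [this, pow_add]

/-- solving for an `x` coordinate -/
lemma cnt_solve_x {m r v : ℕ} (F : (Fin (m + 1) → ℤ) → ℤ → ℤ) (h : Fin (m + 1) → ℤ)
    (i : Fin (m + 1)) (hi : ¬ 2 ∣ h i) (a : ℤ → ℤ) (q : ℤ → (Fin (m + 1) → ℤ) → ℤ)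
    (hq : ∀ y, IsQuad (q y)) (hF : ∀ x y, F x y = a y + ∑ i, h i * x i + 2 * q y x) :
    cnt r r v F = 2 ^ (v + r * m) := by
  unfold cnt
  rw [Finset.sum_comm]
  have : ∀ y : Fin (2 ^ v), (∑ x : Fin (m + 1) → Fin (2 ^ r),
      if (2 : ℤ) ^ r ∣ F (fun i => ((x i : ℕ) : ℤ)) ((y : ℕ) : ℤ) then 1 else 0) = 2 ^ (r * m) :=
    fun y => hensel_quad m r h i hi (a (y : ℕ)) (q (y : ℕ)) (hq _) (fun x => F x (y : ℕ))
      (fun x => hF x _)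
  simp only [this]
  simp [pow_add]

/-- the family of functions in the induction -/
def Fam {m : ℕ} (A : (Fin m → ℤ) → ℤ) (s : ℕ) (L0 : ℤ) (j : ℕ) (b : Fin m → ℤ) :
    (Fin m → ℤ) → ℤ → ℤ :=
  fun x y => A x + 2 ^ s * y * (L0 + 2 ^ j * ∑ i, b i * x i)

lemma IsQuad.lin {m : ℕ} (c : ℤ) (b : Fin m → ℤ) : IsQuad (fun x => c + ∑ i, b i * x i) :=
  ⟨c, b, fun _ _ => 0, fun x => by simp⟩

lemma fam_modEq_x {m : ℕ} {A : (Fin m → ℤ) → ℤ} (hA : IsQuad A) (s : ℕ) (L0 : ℤ) (j : ℕ)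
    (b : Fin m → ℤ) (d : ℤ) (x x' : Fin m → ℤ) (y : ℤ) (h : ∀ i, x i ≡ x' i [ZMOD d]) :
    Fam A s L0 j b x y ≡ Fam A s L0 j b x' y [ZMOD d] := by
  unfold Fam
  have h1 := (IsQuad.lin 0 b).congr d x x' h
  simp only [zero_add] at h1
  exact (hA.congr d x x' h).add ((Int.ModEq.add rfl (h1.mul_left _)).mul_left _)

lemma fam_modEq_y {m : ℕ} (A : (Fin m → ℤ) → ℤ) (s : ℕ) (L0 : ℤ) (j : ℕ)
    (b : Fin m → ℤ) (r v : ℕ) (hr : r ≤ s + v) (x : Fin m → ℤ) (y y' : ℤ) (h : y ≡ y' [ZMOD 2 ^ v]) :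
    Fam A s L0 j b x y ≡ Fam A s L0 j b x y' [ZMOD 2 ^ r] := by
  unfold Fam
  refine Int.ModEq.add rfl (Int.ModEq.mul_right _ ?_)
  rw [Int.modEq_iff_dvd] at h ⊢
  rw [← mul_sub]
  refine (pow_dvd_pow _ hr).trans ?_
  rw [pow_add]
  exact mul_dvd_mul_left _ h

lemma step {μ ρ s v j E : ℕ}
    (IH : ∀ s v j E (A : (Fin (μ + 2) → ℤ) → ℤ) L0 b, IsQuad A → ρ ≤ s + v → 2 * v ≤ ρ + 2 * j + 1 →
      2 * E ≤ ρ * (μ + 2) + 2 * v - 1 → 2 * E ≤ ρ * (μ + 2) + ρ + 2 * j - 1 →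
      2 ^ E ∣ cnt ρ ρ v (Fam A s L0 j b))
    (A : (Fin (μ + 2) → ℤ) → ℤ) (L0 : ℤ) (b : Fin (μ + 2) → ℤ) (hA : IsQuad A)
    (hs : 1 ≤ s)
    (h1 : ρ + 2 ≤ s + v) (h2 : 2 * v ≤ ρ + 2 + 2 * j + 1)
    (h3 : 2 * E ≤ (ρ + 2) * (μ + 2) + 2 * v - 1)
    (h4 : 2 * E ≤ (ρ + 2) * (μ + 2) + (ρ + 2) + 2 * j - 1) :
    2 ^ E ∣ cnt (ρ + 2) (ρ + 2) v (Fam A s L0 j b) := by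
  have m1 : (ρ + 2) * (μ + 2) = ρ * μ + 2 * ρ + 2 * μ + 4 := by ring
  have m2 : ρ * (μ + 2) = ρ * μ + 2 * ρ := by ring
  rw [cnt_split]
  refine Finset.dvd_sum fun z _ => ?_
  obtain ⟨σ, rfl⟩ : ∃ σ, s = σ + 1 := ⟨s - 1, by omega⟩
  set x0 : Fin (μ + 2) → ℤ := fun i => ((z i : ℕ) : ℤ) with hx0
  obtain ⟨h, M, hAs⟩ := hA.shift x0
  set L1 : ℤ := L0 + 2 ^ j * ∑ i, b i * x0 i with hL1
  have hF : ∀ (x : Fin (μ + 2) → ℤ) (y : ℤ), Fam A (σ + 1) L0 j b (fun i => x0 i + 2 * x i) y =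
      A x0 + 2 * ∑ i, h i * x i + 4 * ∑ i, ∑ j, M i j * (x i * x j) +
        2 * (2 ^ σ * y * (L1 + 2 ^ (j + 1) * ∑ i, b i * x i)) := by
    intro x y
    have e1 : ∑ i, b i * (x0 i + 2 * x i) = ∑ i, b i * x0 i + 2 * ∑ i, b i * x i := by
      rw [Finset.mul_sum, ← Finset.sum_add_distrib]
      exact Finset.sum_congr rfl fun i _ => by ring
    unfold Fam
    rw [hAs, e1, hL1]
    ring
  by_cases ha : (2 : ℤ) ∣ A x0
  swap
  · rw [cnt_zero]
    · simp
    · intro x y; rw [hF]; omega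
  obtain ⟨a, ha⟩ := ha
  rw [cnt_half (G := fun x y => a + ∑ i, h i * x i + 2 * ∑ i, ∑ j, M i j * (x i * x j) +
      2 ^ σ * y * (L1 + 2 ^ (j + 1) * ∑ i, b i * x i)) (by intro x y; rw [hF, ha]; ring)]
  by_cases hodd : ∃ i, ¬ 2 ∣ h i
  · obtain ⟨i, hi⟩ := hodd
    rw [cnt_solve_x _ h i hi (fun y => a + 2 ^ σ * y * L1)
      (fun y x => ∑ i, ∑ j, M i j * (x i * x j) + 2 ^ σ * y * 2 ^ j * ∑ i, b i * x i)]
    · apply pow_dvd_pow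
      have : (ρ + 1) * (μ + 1) = ρ * μ + ρ + μ + 1 := by ring
      omega
    · intro y
      refine ⟨0, fun i => 2 ^ σ * y * 2 ^ j * b i, M, fun x => ?_⟩
      beta_reduce
      rw [Finset.mul_sum]
      simp only [mul_assoc]
      ring
    · intro x y; ring
  push Not at hodd
  choose h' hh' using hodd
  have hsum : ∀ x : Fin (μ + 2) → ℤ, ∑ i, h i * x i = 2 * ∑ i, h' i * x i := by
    intro x
    rw [Finset.mul_sum]
    exact Finset.sum_congr rfl fun i _ => by rw [hh']; ring
  simp only [hsum]
  rcases Nat.eq_zero_or_pos σ with rfl | hσ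
  · -- s = 1
    by_cases hLo : (2 : ℤ) ∣ L1
    swap
    · obtain ⟨t, rfl⟩ : ∃ t, v = ρ + 1 + t := ⟨v - (ρ + 1), by omega⟩
      rw [cnt_solve_y _ (fun x => a + 2 * ∑ i, h' i * x i + 2 * ∑ i, ∑ j, M i j * (x i * x j))
        (fun x => L1 + 2 ^ (j + 1) * ∑ i, b i * x i)]
      · apply pow_dvd_pow
        have : (ρ + 1) * (μ + 2) = ρ * μ + 2 * ρ + μ + 2 := by ring
        omega
      · intro x y; ring
      · intro x; rw [pow_succ', mul_assoc]; omega
    obtain ⟨L2, hL2⟩ := hLo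
    by_cases ha2 : (2 : ℤ) ∣ a
    swap
    · rw [cnt_zero]
      · simp
      · intro x y; rw [hL2, pow_succ',
          show a + 2 * ∑ i, h' i * x i + 2 * ∑ i, ∑ j, M i j * (x i * x j) +
            2 ^ 0 * y * (2 * L2 + 2 * 2 ^ j * ∑ i, b i * x i) = a + 2 * (∑ i, h' i * x i +
              ∑ i, ∑ j, M i j * (x i * x j) + y * (L2 + 2 ^ j * ∑ i, b i * x i)) by ring]
        omega
    obtain ⟨a', ha'⟩ := ha2
    have hq : IsQuad (fun x => a' + ∑ i, h' i * x i + ∑ i, ∑ j, M i j * (x i * x j)) :=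
      ⟨a', h', M, fun x => rfl⟩
    rw [cnt_half (G := Fam (fun x => a' + ∑ i, h' i * x i + ∑ i, ∑ j, M i j * (x i * x j)) 0 L2 j b)
      (by intro x y; unfold Fam; rw [ha', hL2]; ring)]
    rw [cnt_red_x _ (fun x x' y hx => fam_modEq_x hq _ _ _ _ _ x x' y hx)]
    obtain ⟨v, rfl⟩ : ∃ v', v = v' + 1 := ⟨v - 1, by omega⟩
    rw [cnt_red_y _ (fun x y y' hy => fam_modEq_y _ _ _ _ _ _ _ (by omega) x y y' hy)]
    apply dvd_aux
    apply dvd_aux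
    apply IH _ _ _ _ _ _ _ hq <;> omega
  · obtain ⟨σ, rfl⟩ : ∃ σ', σ = σ' + 1 := ⟨σ - 1, by omega⟩
    by_cases ha2 : (2 : ℤ) ∣ a
    swap
    · rw [cnt_zero]
      · simp
      · intro x y; rw [pow_succ' 2 σ,
          show a + 2 * ∑ i, h' i * x i + 2 * ∑ i, ∑ j, M i j * (x i * x j) +
            2 * 2 ^ σ * y * (L1 + 2 ^ (j + 1) * ∑ i, b i * x i) = a + 2 * (∑ i, h' i * x i +
              ∑ i, ∑ j, M i j * (x i * x j) + 2 ^ σ * y * (L1 + 2 ^ (j + 1) * ∑ i, b i * x i)) by ring]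
        omega
    obtain ⟨a', ha'⟩ := ha2
    have hq : IsQuad (fun x => a' + ∑ i, h' i * x i + ∑ i, ∑ j, M i j * (x i * x j)) :=
      ⟨a', h', M, fun x => rfl⟩
    rw [cnt_half (G := Fam (fun x => a' + ∑ i, h' i * x i + ∑ i, ∑ j, M i j * (x i * x j)) σ L1 (j + 1) b)
      (by intro x y; unfold Fam; rw [ha']; ring)]
    rw [cnt_red_x _ (fun x x' y hx => fam_modEq_x hq _ _ _ _ _ x x' y hx)]
    apply dvd_aux
    apply IH _ _ _ _ _ _ _ hq <;> omega

lemma cnt_const_y {m R r v : ℕ} (F : (Fin m → ℤ) → ℤ → ℤ) (A : (Fin m → ℤ) → ℤ)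
    (h : ∀ x y, (2 : ℤ) ^ r ∣ F x y ↔ (2 : ℤ) ^ r ∣ A x) :
    cnt R r v F = 2 ^ v * ∑ x : Fin m → Fin (2 ^ R),
      if (2 : ℤ) ^ r ∣ A (fun i => ((x i : ℕ) : ℤ)) then 1 else 0 := by
  unfold cnt
  rw [Finset.mul_sum]
  refine Finset.sum_congr rfl fun x _ => ?_
  simp only [h]
  simp

lemma pos_s {μ r : ℕ}
    (IH : ∀ ρ, ρ < r → ∀ s v j E (A : (Fin (μ + 2) → ℤ) → ℤ) L0 b, IsQuad A → ρ ≤ s + v →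
      2 * v ≤ ρ + 2 * j + 1 →
      2 * E ≤ ρ * (μ + 2) + 2 * v - 1 → 2 * E ≤ ρ * (μ + 2) + ρ + 2 * j - 1 →
      2 ^ E ∣ cnt ρ ρ v (Fam A s L0 j b))
    (s v j E : ℕ)
    (A : (Fin (μ + 2) → ℤ) → ℤ) (L0 : ℤ) (b : Fin (μ + 2) → ℤ) (hA : IsQuad A)
    (hs : 1 ≤ s)
    (h1 : r ≤ s + v) (h2 : 2 * v ≤ r + 2 * j + 1)
    (h3 : 2 * E ≤ r * (μ + 2) + 2 * v - 1)
    (h4 : 2 * E ≤ r * (μ + 2) + r + 2 * j - 1) :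
    2 ^ E ∣ cnt r r v (Fam A s L0 j b) := by
  match r with
  | 0 =>
    rw [cnt_const_y _ (fun _ => 0) (by simp)]
    apply Dvd.dvd.mul_right
    apply pow_dvd_pow
    omega
  | 1 =>
    rw [cnt_const_y _ A]
    · apply dvd_aux
      rcases Nat.eq_zero_or_pos (E - v) with h0 | h0
      · rw [h0]; simp
      apply ax _ _ _ _ hA
      omega
    · intro x y
      obtain ⟨σ, rfl⟩ : ∃ σ, s = σ + 1 := ⟨s - 1, by omega⟩
      unfold Fam
      rw [pow_one, pow_succ', mul_assoc, mul_assoc]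
      omega
  | ρ + 2 => exact step (IH ρ (by omega)) A L0 b hA hs h1 h2 h3 h4

theorem main {μ : ℕ} (r : ℕ) : ∀ s v j E (A : (Fin (μ + 2) → ℤ) → ℤ) L0 b, IsQuad A → r ≤ s + v →
      2 * v ≤ r + 2 * j + 1 →
      2 * E ≤ r * (μ + 2) + 2 * v - 1 → 2 * E ≤ r * (μ + 2) + r + 2 * j - 1 →
      2 ^ E ∣ cnt r r v (Fam A s L0 j b) := by
  induction r using Nat.strong_induction_on with
  | _ r IH =>
  intro s v j E A L0 b hA h1 h2 h3 h4
  rcases Nat.eq_zero_or_pos s with rfl | hs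
  swap
  · exact pos_s IH s v j E A L0 b hA hs h1 h2 h3 h4
  rcases Nat.eq_zero_or_pos r with rfl | hr
  · rw [cnt_const_y _ (fun _ => 0) (by simp)]
    apply Dvd.dvd.mul_right
    apply pow_dvd_pow
    omega
  rcases Nat.eq_zero_or_pos j with rfl | hj
  · obtain rfl : r = 1 := by omega
    obtain rfl : v = 1 := by omega
    have := ax2 (μ + 2) E (by omega) A hA L0 b
    unfold cnt Fam
    simpa using this
  obtain ⟨j, rfl⟩ : ∃ j', j = j' + 1 := ⟨j - 1, by omega⟩
  by_cases hL : (2 : ℤ) ∣ L0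
  · obtain ⟨L1, rfl⟩ := hL
    have e : Fam A 0 (2 * L1) (j + 1) b = Fam A 1 L1 j b := by
      funext x y; unfold Fam; ring
    rw [e]
    obtain ⟨v, rfl⟩ : ∃ v', v = v' + 1 := ⟨v - 1, by omega⟩
    rw [cnt_red_y _ (fun x y y' hy => fam_modEq_y _ _ _ _ _ _ _ (by omega) x y y' hy)]
    apply dvd_aux
    apply pos_s IH _ _ _ _ _ _ _ hA <;> omega
  · obtain ⟨t, rfl⟩ : ∃ t, v = r + t := ⟨v - r, by omega⟩
    rw [cnt_solve_y _ A (fun x => L0 + 2 ^ (j + 1) * ∑ i, b i * x i)]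
    · apply pow_dvd_pow
      have : r * (μ + 2) = r * μ + 2 * r := by ring
      omega
    · intro x y; unfold Fam; ring
    · intro x; rw [pow_succ', mul_assoc]; omega

lemma top {μ : ℕ} (r s v E : ℕ) (A : (Fin (μ + 2) → ℤ) → ℤ) (hA : IsQuad A) (L0 : ℤ)
    (b : Fin (μ + 2) → ℤ) (c l G : ℤ) (h1 : r ≤ s + v)
    (h2 : 2 * E ≤ r * (μ + 2) + 2 * v - 1) (h3 : 2 * E ≤ r * (μ + 2) + r - 1) :
    2 ^ E ∣ cnt r r v (fun x y => A x + (l + G * 2 ^ s * y) * (L0 + ∑ i, b i * x i) +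
      c * (l + G * 2 ^ s * y) ^ 2) := by
  obtain ⟨v', t, rfl, hv⟩ : ∃ v' t, v = v' + t ∧ v' = min v ((r + 1) / 2) :=
    ⟨min v ((r + 1) / 2), v - min v ((r + 1) / 2), by omega, rfl⟩
  rw [cnt_split_y]
  refine Finset.dvd_sum fun y0 _ => ?_
  set l' : ℤ := l + G * 2 ^ s * ((y0 : ℕ) : ℤ) with hl'
  have hq : IsQuad (fun x => A x + l' * (L0 + ∑ i, b i * x i) + c * l' ^ 2) := by
    obtain ⟨c', b', M, hA⟩ := hA
    refine ⟨c' + l' * L0 + c * l' ^ 2, fun i => b' i + l' * b i, M, fun x => ?_⟩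
    beta_reduce
    rw [hA]
    simp only [add_mul, Finset.sum_add_distrib, mul_assoc, ← Finset.mul_sum]
    ring
  rw [cnt_congr (G := Fam (fun x => A x + l' * (L0 + ∑ i, b i * x i) + c * l' ^ 2) (s + t)
    (G * L0 + 2 * c * l' * G + c * G ^ 2 * 2 ^ (s + t)) 0 (fun i => G * b i))]
  · apply main _ _ _ _ _ _ _ _ hq <;> omega
  · intro x y
    apply dvd_iff_of_modEq
    rw [Int.modEq_iff_dvd]
    have hy : (2 : ℤ) ∣ y - y ^ 2 := by
      rw [show y - y ^ 2 = -((y - 1) * (y - 1 + 1)) by ring]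
      exact (Int.even_mul_succ_self (y - 1)).two_dvd.neg_right
    have hd : (2 : ℤ) ^ r ∣ 2 ^ (2 * (s + t)) * (y - y ^ 2) := by
      refine (pow_dvd_pow 2 (show r ≤ 2 * (s + t) + 1 by omega)).trans ?_
      rw [pow_succ]
      exact mul_dvd_mul_left _ hy
    have : Fam (fun x => A x + l' * (L0 + ∑ i, b i * x i) + c * l' ^ 2) (s + t)
        (G * L0 + 2 * c * l' * G + c * G ^ 2 * 2 ^ (s + t)) 0 (fun i => G * b i) x y -
        (A x + (l + G * 2 ^ s * (((y0 : ℕ) : ℤ) + 2 ^ t * y)) * (L0 + ∑ i, b i * x i) +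
      c * (l + G * 2 ^ s * (((y0 : ℕ) : ℤ) + 2 ^ t * y)) ^ 2) =
        c * G ^ 2 * (2 ^ (2 * (s + t)) * (y - y ^ 2)) := by
      unfold Fam
      simp only [mul_assoc, ← Finset.mul_sum]
      rw [hl']
      ring
    rw [this]
    exact Dvd.dvd.mul_left hd _

lemma isum (w : ℤ) (q R : ℕ) : ∃ a p, q = a + p ∧ ∀ V : ℤ,
    ∑ i : Fin (2 ^ q), (if (2 : ℤ) ^ (R + q) ∣ V - w * 2 ^ R * ((i : ℕ) : ℤ) then 1 else 0) =
      2 ^ a * (if (2 : ℤ) ^ (R + a) ∣ V then 1 else 0) := by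
  have h1 : ∃ a p u, q = a + p ∧ w = 2 ^ a * u ∧ (p = 0 ∨ ¬ 2 ∣ u) := by
    induction q with
    | zero => exact ⟨0, 0, w, rfl, by simp, Or.inl rfl⟩
    | succ q ih =>
      obtain ⟨a, p, u, h1, h2, h3⟩ := ih
      by_cases hu : (2 : ℤ) ∣ u
      · obtain ⟨u', rfl⟩ := hu
        have : p = 0 := by
          rcases h3 with h3 | h3
          · exact h3
          · exact absurd (dvd_mul_right _ _) h3
        exact ⟨a + 1, 0, u', by omega, by rw [h2]; ring, Or.inl rfl⟩
      · exact ⟨a, p + 1, u, by omega, h2, Or.inr hu⟩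
  obtain ⟨a, p, u, rfl, rfl, hu⟩ := h1
  refine ⟨a, p, rfl, fun V => ?_⟩
  by_cases hV : (2 : ℤ) ^ (R + a) ∣ V
  · obtain ⟨V', rfl⟩ := hV
    have e : ∀ i : ℤ, (2 : ℤ) ^ (R + (a + p)) ∣ 2 ^ (R + a) * V' - 2 ^ a * u * 2 ^ R * i ↔
        (2 : ℤ) ^ p ∣ V' - u * i := by
      intro i
      rw [show (2 : ℤ) ^ (R + a) * V' - 2 ^ a * u * 2 ^ R * i = 2 ^ (R + a) * (V' - u * i) by ring,
        ← add_assoc, pow_add 2 (R + a) p, Int.mul_dvd_mul_iff_left (by positivity)]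
    simp only [e]
    rw [fin_red (2 ^ p) (2 ^ a) (2 ^ (a + p)) (by ring)
      (fun i => if (2 : ℤ) ^ p ∣ V' - u * i then 1 else 0)]
    · congr 1
      simp only [dvd_mul_right, if_true]
      rcases hu with rfl | hu
      · simp
      · apply solve1 p (fun i => V' - u * i)
        intro t t'
        refine ⟨(-u) / 2, ?_⟩
        have : 2 * ((-u) / 2) + 1 = -u := by omega
        rw [this]; ring
    · intro x y
      have : (2 : ℤ) ^ p ∣ V' - u * (x + ((2 ^ p : ℕ) : ℤ) * y) ↔ (2 : ℤ) ^ p ∣ V' - u * x := by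
        apply dvd_iff_of_modEq
        rw [Int.modEq_iff_dvd]
        exact ⟨u * y, by push_cast; ring⟩
      simp only [this]
  · rw [if_neg hV, mul_zero]
    refine Finset.sum_eq_zero fun i _ => if_neg fun hd => hV ?_
    have h1 : (2 : ℤ) ^ (R + a) ∣ 2 ^ a * u * 2 ^ R * ((i : ℕ) : ℤ) := ⟨u * ((i : ℕ) : ℤ), by ring⟩
    have h2 := dvd_add ((pow_dvd_pow 2 (show R + a ≤ R + (a + p) by omega)).trans hd) h1
    simpa using h2

lemma poly_form {n : ℕ} {R : Type*} [CommRing R] (Q : MvPolynomial (Fin n) R)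
    (hQ : Q.totalDegree ≤ 2) : ∃ (c : R) (b : Fin n → R) (M : Fin n → Fin n → R), ∀ x,
      MvPolynomial.eval x Q = c + ∑ i, b i * x i + ∑ i, ∑ j, M i j * (x i * x j) := by
  classical
  have mono : ∀ (d : Fin n →₀ ℕ) (k : R), d.degree ≤ 2 →
      ∃ (c : R) (b : Fin n → R) (M : Fin n → Fin n → R), ∀ x,
      MvPolynomial.eval x (MvPolynomial.monomial d k) =
        c + ∑ i, b i * x i + ∑ i, ∑ j, M i j * (x i * x j) := by
    intro d k hd
    by_cases h0 : d = 0
    · subst h0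
      exact ⟨k, fun _ => 0, fun _ _ => 0, fun x => by simp⟩
    obtain ⟨i, hi⟩ := Finsupp.ne_iff.1 h0
    obtain ⟨d', rfl⟩ : ∃ d', d = d' + Finsupp.single i 1 :=
      ⟨d - Finsupp.single i 1, (tsub_add_cancel_of_le (by
        rw [Finsupp.single_le_iff]; simp at hi; omega)).symm⟩
    by_cases h1 : d' = 0
    · subst h1
      refine ⟨0, Pi.single i k, fun _ _ => 0, fun x => ?_⟩
      simp [MvPolynomial.eval_monomial, Pi.single_apply]
    obtain ⟨j, hj⟩ := Finsupp.ne_iff.1 h1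
    obtain ⟨d'', rfl⟩ : ∃ d'', d' = d'' + Finsupp.single j 1 :=
      ⟨d' - Finsupp.single j 1, (tsub_add_cancel_of_le (by
        rw [Finsupp.single_le_iff]; simp at hj; omega)).symm⟩
    have h2 : d'' = 0 := by
      rw [map_add, map_add, Finsupp.degree_single, Finsupp.degree_single] at hd
      rw [← Finsupp.degree_eq_zero_iff]
      omega
    subst h2
    refine ⟨0, fun _ => 0, fun a b => if a = i then (if b = j then k else 0) else 0, fun x => ?_⟩
    rw [MvPolynomial.eval_monomial]
    simp only [zero_add, zero_mul, Finset.sum_const_zero, add_zero, ite_mul]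
    rw [Finset.sum_eq_single i, Finset.sum_eq_single j]
    · rw [Finsupp.prod_add_index' (by simp) (by intros; ring)]
      simp [mul_comm]
    · intro b _ hb; simp [hb]
    · simp
    · intro b _ hb; simp [hb]
    · simp
  have key : ∀ s : Finset (Fin n →₀ ℕ), s ⊆ Q.support →
      ∃ (c : R) (b : Fin n → R) (M : Fin n → Fin n → R), ∀ x,
      MvPolynomial.eval x (∑ d ∈ s, MvPolynomial.monomial d (Q.coeff d)) =
        c + ∑ i, b i * x i + ∑ i, ∑ j, M i j * (x i * x j) := by
    intro s
    induction s using Finset.induction_on with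
    | empty => exact fun _ => ⟨0, fun _ => 0, fun _ _ => 0, fun x => by simp⟩
    | insert d s hd ih =>
      intro hs
      obtain ⟨c, b, M, h⟩ := ih (fun y hy => hs (Finset.mem_insert_of_mem hy))
      obtain ⟨c', b', M', h'⟩ := mono d (Q.coeff d) (by
        have := MvPolynomial.le_totalDegree (hs (Finset.mem_insert_self d s))
        rw [Finsupp.degree_eq_sum]
        rw [Finsupp.sum_fintype _ _ (by simp)] at this
        omega)
      refine ⟨c' + c, fun i => b' i + b i, fun i j => M' i j + M i j, fun x => ?_⟩
      rw [Finset.sum_insert hd, map_add, h, h']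
      simp only [add_mul, Finset.sum_add_distrib]
      ring
  obtain ⟨c, b, M, h⟩ := key Q.support (Finset.Subset.refl _)
  refine ⟨c, b, M, fun x => ?_⟩
  rw [← h, ← MvPolynomial.as_sum]

/-- integral normal form of the values of `Q` -/
lemma int_form {m N : ℕ} (Q : MvPolynomial (Fin (m + 1)) (ZMod N)) (hQ : Q.totalDegree ≤ 2) :
    ∃ (A : (Fin m → ℤ) → ℤ) (L0 : ℤ) (b : Fin m → ℤ) (c : ℤ), IsQuad A ∧
      ∀ (x : Fin m → ℤ) (z : ℤ) (X : Fin (m + 1) → ZMod N), (∀ i, X (Fin.castSucc i) = (x i : ZMod N)) →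
        X (Fin.last m) = (z : ZMod N) →
        MvPolynomial.eval X Q = ((A x + z * (L0 + ∑ i, b i * x i) + c * z ^ 2 : ℤ) : ZMod N) := by
  obtain ⟨c, b, M, h⟩ := poly_form Q hQ
  obtain ⟨c, rfl⟩ := ZMod.intCast_surjective c
  choose b' hb using fun i => ZMod.intCast_surjective (b i)
  choose M' hM using fun i j => ZMod.intCast_surjective (M i j)
  refine ⟨fun x => c + ∑ i : Fin m, b' i.castSucc * x i +
    ∑ i : Fin m, ∑ j : Fin m, M' i.castSucc j.castSucc * (x i * x j), b' (Fin.last m),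
    fun i => M' i.castSucc (Fin.last m) + M' (Fin.last m) i.castSucc,
    M' (Fin.last m) (Fin.last m), ⟨_, _, _, fun x => rfl⟩, fun x z X hX hz => ?_⟩
  rw [h]
  simp only [Fin.sum_univ_castSucc, hX, hz, ← hb, ← hM]
  push_cast
  simp only [add_mul, Finset.sum_add_distrib, mul_add, Finset.mul_sum]
  have e1 : ∑ i : Fin m, (z : ZMod N) * ((M' i.castSucc (Fin.last m) : ZMod N) * (x i : ZMod N)) =
    ∑ i : Fin m, (M' i.castSucc (Fin.last m) : ZMod N) * ((x i : ZMod N) * z) :=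
    Finset.sum_congr rfl fun i _ => by ring
  have e2 : ∑ i : Fin m, (z : ZMod N) * ((M' (Fin.last m) i.castSucc : ZMod N) * (x i : ZMod N)) =
    ∑ i : Fin m, (M' (Fin.last m) i.castSucc : ZMod N) * ((z : ZMod N) * (x i : ZMod N)) :=
    Finset.sum_congr rfl fun i _ => by ring
  rw [e1, e2]
  ring

end S6

/-- Corollary (b): the double sum `∑_{i<2^q} ∑_{j<2^v} #(k+w2^{r-q}i)_{Q, z=l+g2^{r-v}j}`
is divisible by `2^{⌈(r(n-1)+min(2v,r))/2⌉+q-1}`. -/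
theorem stmt_6 (r : ℕ) (hr : 1 ≤ r) (n : ℕ) (hn : 3 ≤ n)
    (Q : MvPolynomial (Fin n) (ZMod (2 ^ r))) (hQ : Q.totalDegree ≤ 2)
    (q v : ℕ) (hq : q ≤ r) (hv : v ≤ r) (k w g l : ZMod (2 ^ r)) :
    (2 ^ ((r * (n - 1) + min (2 * v) r + 1) / 2 + q - 1) : ℕ) ∣
    ∑ i : Fin (2 ^ q), ∑ j : Fin (2 ^ v),
      Nat.card {x : Fin (n - 1) → ZMod (2 ^ r) //
        MvPolynomial.eval
          (fun t : Fin n => if h : (t : ℕ) < n - 1 then x ⟨t, h⟩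
            else l + g * (2 : ZMod (2 ^ r)) ^ (r - v) * ((j : ℕ) : ZMod (2 ^ r))) Q
          = k + w * (2 : ZMod (2 ^ r)) ^ (r - q) * ((i : ℕ) : ZMod (2 ^ r))} := by
  classical
  obtain ⟨μ, rfl⟩ : ∃ μ, n = μ + 3 := ⟨n - 3, by omega⟩
  obtain ⟨A, L0, b, c, hA, hev⟩ := S6.int_form (m := μ + 2) Q hQ
  obtain ⟨K, rfl⟩ := ZMod.intCast_surjective k
  obtain ⟨W, rfl⟩ := ZMod.intCast_surjective w
  obtain ⟨G, rfl⟩ := ZMod.intCast_surjective g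
  obtain ⟨l, rfl⟩ := ZMod.intCast_surjective l
  obtain ⟨R, rfl⟩ : ∃ R, r = R + q := ⟨r - q, by omega⟩
  obtain ⟨a, p, hap, hsum⟩ := S6.isum W q R
  set F : (Fin (μ + 2) → ℤ) → ℤ → ℤ := fun x y => (A x - K) +
    (l + G * 2 ^ (R + q - v) * y) * (L0 + ∑ i, b i * x i) +
      c * (l + G * 2 ^ (R + q - v) * y) ^ 2 with hF
  have hbij : Function.Bijective (fun t : Fin (2 ^ (R + q)) => ((t : ℕ) : ZMod (2 ^ (R + q)))) := by
    rw [Fintype.bijective_iff_injective_and_card]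
    refine ⟨fun t t' h => ?_, by simp [ZMod.card]⟩
    have := (ZMod.natCast_eq_natCast_iff' _ _ _).1 h
    rw [Nat.mod_eq_of_lt t.2, Nat.mod_eq_of_lt t'.2] at this
    exact Fin.ext this
  have hcard : ∀ (i : Fin (2 ^ q)) (j : Fin (2 ^ v)),
      Nat.card {x : Fin (μ + 3 - 1) → ZMod (2 ^ (R + q)) //
        MvPolynomial.eval
          (fun t : Fin (μ + 3) => if h : (t : ℕ) < μ + 3 - 1 then x ⟨t, h⟩
            else (l : ZMod (2 ^ (R + q))) + (G : ZMod (2 ^ (R + q))) *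
              (2 : ZMod (2 ^ (R + q))) ^ (R + q - v) * ((j : ℕ) : ZMod (2 ^ (R + q)))) Q
          = (K : ZMod (2 ^ (R + q))) + (W : ZMod (2 ^ (R + q))) *
            (2 : ZMod (2 ^ (R + q))) ^ (R + q - q) * ((i : ℕ) : ZMod (2 ^ (R + q)))} =
      ∑ x : Fin (μ + 2) → Fin (2 ^ (R + q)),
        if (2 : ℤ) ^ (R + q) ∣ F (fun i => ((x i : ℕ) : ℤ)) ((j : ℕ) : ℤ) -
          W * 2 ^ R * ((i : ℕ) : ℤ) then 1 else 0 := by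
    intro i j
    rw [Nat.card_eq_fintype_card, Fintype.card_subtype, Finset.card_filter]
    change ∑ x : Fin (μ + 2) → ZMod (2 ^ (R + q)), _ = _
    rw [← Equiv.sum_comp (Equiv.arrowCongr (Equiv.refl (Fin (μ + 2))) (Equiv.ofBijective _ hbij))]
    refine Finset.sum_congr rfl fun x _ => if_congr ?_ rfl rfl
    rw [hev (fun i => ((x i : ℕ) : ℤ)) (l + G * 2 ^ (R + q - v) * ((j : ℕ) : ℤ)) _ ?_ ?_]
    · rw [← sub_eq_zero, Nat.add_sub_cancel]
      rw [show (2 : ℤ) ^ (R + q) = ((2 ^ (R + q) : ℕ) : ℤ) by push_cast; rfl,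
        ← ZMod.intCast_zmod_eq_zero_iff_dvd, hF]
      push_cast
      apply Eq.congr _ rfl
      ring
    · intro i
      have : (i.castSucc : ℕ) < μ + 3 - 1 := i.2
      rw [dif_pos this]
      simp [Equiv.arrowCongr]
    · have : ¬ ((Fin.last (μ + 2) : Fin (μ + 3)) : ℕ) < μ + 3 - 1 := by simp
      rw [dif_neg this]
      push_cast
      rfl
  have htot : (∑ i : Fin (2 ^ q), ∑ j : Fin (2 ^ v), ∑ x : Fin (μ + 2) → Fin (2 ^ (R + q)),
        if (2 : ℤ) ^ (R + q) ∣ F (fun i => ((x i : ℕ) : ℤ)) ((j : ℕ) : ℤ) -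
          W * 2 ^ R * ((i : ℕ) : ℤ) then 1 else 0) = 2 ^ a * S6.cnt (R + q) (R + a) v F := by
    rw [Finset.sum_comm]
    unfold S6.cnt
    rw [Finset.sum_comm (s := (Finset.univ : Finset (Fin (μ + 2) → Fin (2 ^ (R + q))))),
      Finset.mul_sum]
    refine Finset.sum_congr rfl fun j _ => ?_
    rw [Finset.sum_comm, Finset.mul_sum]
    refine Finset.sum_congr rfl fun x _ => ?_
    exact hsum _
  simp only [hcard]
  rw [htot]
  have hA' : S6.IsQuad (fun x => A x - K) := by
    obtain ⟨c', b', M, h⟩ := hA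
    exact ⟨c' - K, b', M, fun x => by beta_reduce; rw [h]; ring⟩
  have hlin : ∀ (d : ℤ) (x x' : Fin (μ + 2) → ℤ), (∀ i, x i ≡ x' i [ZMOD d]) →
      L0 + ∑ i, b i * x i ≡ L0 + ∑ i, b i * x' i [ZMOD d] := fun d x x' h =>
    (S6.IsQuad.lin L0 b).congr d x x' h
  subst hap
  rw [← add_assoc R a p, S6.cnt_red_x F (fun x x' y h =>
    ((hA'.congr _ x x' h).add ((hlin _ x x' h).mul_left _)).add rfl)]
  obtain ⟨v', t, rfl, ht⟩ : ∃ v' t, v = v' + t ∧ t = min p v := ⟨v - min p v, min p v, by omega, rfl⟩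
  rw [S6.cnt_red_y F]
  · apply S6.dvd_aux
    apply S6.dvd_aux
    apply S6.dvd_aux
    have m1 : (R + a + p) * (μ + 3 - 1) = (R + a) * (μ + 2) + p * μ + 2 * p := by
      rw [show μ + 3 - 1 = μ + 2 by omega]; ring
    have m2 : p * (μ + 2) = p * μ + 2 * p := by ring
    rw [← add_assoc R a p] at hv hr
    have m0 : 1 ≤ (R + a) * (μ + 2) + p := by
      rcases Nat.eq_zero_or_pos (R + a) with h | h
      · omega
      · have := Nat.mul_pos h (show 0 < μ + 2 by omega); omega
    apply S6.top (R + a) (R + (a + p) - (v' + t)) v' _ _ hA' <;> omega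
  · intro x y y' h
    have hz : l + G * 2 ^ (R + (a + p) - (v' + t)) * y ≡ l + G * 2 ^ (R + (a + p) - (v' + t)) * y'
        [ZMOD 2 ^ (R + a)] := by
      refine Int.ModEq.add rfl ?_
      rw [Int.modEq_iff_dvd] at h ⊢
      rw [← mul_sub, mul_assoc]
      apply Dvd.dvd.mul_left
      refine (pow_dvd_pow 2 (show R + a ≤ (R + (a + p) - (v' + t)) + v' by omega)).trans ?_
      rw [pow_add]
      exact mul_dvd_mul_left _ h
    exact (Int.ModEq.add rfl (hz.mul_right _)).add ((hz.pow 2).mul_left _)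
end

section
/- Let r ≥ 1 and let m ∈ Z_{2^r} be of the form m = 2^t u where u is a unit of Z_{2^r} and t < r is a natural number. Then the number of pairs (x, y) ∈ Z_{2^r} × Z_{2^r} with x y = m equals (t + 1) · 2^{r-1}. -/
lemma aux_dvd (r k : ℕ) (hk : k ≤ r) :
    Nat.card {x : ZMod (2 ^ r) // (2 : ZMod (2 ^ r)) ^ k ∣ x} = 2 ^ (r - k) := by
  have h := IsAddCyclic.card_nsmulAddMonoidHom_range (G := ZMod (2 ^ r)) (2 ^ k)
  rw [Nat.card_zmod, Nat.gcd_eq_right (pow_dvd_pow 2 hk), Nat.pow_div hk (by norm_num)] at h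
  rw [← h]
  refine Nat.card_congr (Equiv.subtypeEquivRight fun x => ?_)
  simp only [AddMonoidHom.mem_range, nsmulAddMonoidHom_apply, nsmul_eq_mul]
  push_cast
  constructor
  · rintro ⟨c, rfl⟩; exact ⟨c, rfl⟩
  · rintro ⟨c, rfl⟩; exact ⟨c, rfl⟩

lemma aux_ker (r k : ℕ) (hk : k ≤ r) :
    Nat.card {x : ZMod (2 ^ r) // (2 : ZMod (2 ^ r)) ^ k * x = 0} = 2 ^ k := by
  have h := IsAddCyclic.card_nsmulAddMonoidHom_ker (G := ZMod (2 ^ r)) (2 ^ k)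
  rw [Nat.card_zmod, Nat.gcd_eq_right (pow_dvd_pow 2 hk)] at h
  rw [← h]
  refine Nat.card_congr (Equiv.subtypeEquivRight fun x => ?_)
  simp [AddMonoidHom.mem_ker]

lemma aux_unit (r k : ℕ) (x : ZMod (2 ^ r)) (h : (2 : ZMod (2 ^ r)) ^ k ∣ x)
    (h' : ¬ (2 : ZMod (2 ^ r)) ^ (k + 1) ∣ x) :
    ∃ v : (ZMod (2 ^ r))ˣ, x = 2 ^ k * v := by
  obtain ⟨c, rfl⟩ := h
  have hc : IsUnit c := by
    rw [← ZMod.natCast_zmod_val c, ZMod.isUnit_iff_coprime]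
    apply Nat.Coprime.pow_right
    rw [Nat.coprime_comm, Nat.Prime.coprime_iff_not_dvd Nat.prime_two]
    intro ⟨d, hd⟩
    apply h'
    rw [pow_succ]
    refine mul_dvd_mul_left _ ⟨(d : ZMod (2 ^ r)), ?_⟩
    rw [← ZMod.natCast_zmod_val c, hd]; push_cast; rfl
  exact ⟨hc.unit, rfl⟩

lemma aux_fiber (r t k : ℕ) (ht : t < r) (hk : k ≤ t) (u v : (ZMod (2 ^ r))ˣ) :
    Nat.card {y : ZMod (2 ^ r) // (2 ^ k * (v : ZMod (2 ^ r))) * y = 2 ^ t * u} = 2 ^ k := by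
  rw [← aux_ker r k (by omega)]
  obtain ⟨d, rfl⟩ := Nat.exists_eq_add_of_le hk
  refine Nat.card_congr (Equiv.subtypeEquiv (Equiv.subRight (2 ^ d * (u : ZMod (2 ^ r)) * ↑v⁻¹)) fun y => ?_)
  rw [Equiv.subRight_apply]
  have : (v : ZMod (2 ^ r)) * (2 ^ k * (y - 2 ^ d * u * ↑v⁻¹)) =
      2 ^ k * v * y - 2 ^ (k + d) * u := by
    linear_combination (-2 ^ k * 2 ^ d * (u : ZMod (2 ^ r))) * Units.mul_inv v
  rw [← sub_eq_zero, ← this, Units.mul_right_eq_zero]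

lemma aux_empty (r t : ℕ) (ht : t < r) (u : (ZMod (2 ^ r))ˣ) :
    ¬ (2 : ZMod (2 ^ r)) ^ (t + 1) ∣ 2 ^ t * u := by
  rintro ⟨c, hc⟩
  obtain ⟨d, rfl⟩ := Nat.exists_eq_add_of_lt ht
  have h0 : (2 : ZMod (2 ^ (t + d + 1))) ^ (t + d + 1) = 0 := by
    have := ZMod.natCast_self (2 ^ (t + d + 1))
    push_cast at this; exact this
  have h1 : (2 : ZMod (2 ^ (t + d + 1))) ^ (t + d) = 0 := by
    rw [← Units.mul_left_inj u]
    linear_combination 2 ^ d * hc + c * h0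
  have h2 : ((2 ^ (t + d) : ℕ) : ZMod (2 ^ (t + d + 1))) = 0 := by push_cast; exact h1
  rw [ZMod.natCast_eq_zero_iff, Nat.pow_dvd_pow_iff_le_right (by norm_num)] at h2
  omega

open Classical in
lemma aux_sum (r t : ℕ) (ht : t < r) (u : (ZMod (2 ^ r))ˣ) (k : ℕ) (hk : k ≤ t + 1) :
    ∑ x : ZMod (2 ^ r) with ¬ (2 : ZMod (2 ^ r)) ^ k ∣ x,
      Nat.card {y : ZMod (2 ^ r) // x * y = 2 ^ t * u} = k * 2 ^ (r - 1) := by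
  induction k with
  | zero => simp
  | succ k ih =>
    have hs : (Finset.univ.filter fun x : ZMod (2 ^ r) => ¬ (2 : ZMod (2 ^ r)) ^ (k + 1) ∣ x) =
        (Finset.univ.filter fun x : ZMod (2 ^ r) => ¬ (2 : ZMod (2 ^ r)) ^ k ∣ x) ∪
        ((Finset.univ.filter fun x : ZMod (2 ^ r) => (2 : ZMod (2 ^ r)) ^ k ∣ x) \
        (Finset.univ.filter fun x : ZMod (2 ^ r) => (2 : ZMod (2 ^ r)) ^ (k + 1) ∣ x)) := by
      ext x
      have : (2 : ZMod (2 ^ r)) ^ (k + 1) ∣ x → (2 : ZMod (2 ^ r)) ^ k ∣ x :=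
        fun h => (pow_dvd_pow _ (Nat.le_succ k)).trans h
      simp only [Finset.mem_union, Finset.mem_sdiff, Finset.mem_filter, Finset.mem_univ, true_and]
      tauto
    rw [hs, Finset.sum_union, ih (by omega), Finset.sum_congr rfl (g := fun _ => 2 ^ k)]
    · rw [Finset.sum_const, Finset.card_sdiff_of_subset]
      · have h1 := aux_dvd r k (by omega)
        have h2 := aux_dvd r (k + 1) (by omega)
        rw [Nat.card_eq_fintype_card, Fintype.card_subtype] at h1 h2
        rw [h1, h2]
        obtain ⟨d, rfl⟩ := Nat.exists_eq_add_of_le (show k + 1 ≤ r by omega)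
        have e1 : k + 1 + d - k = d + 1 := by omega
        have e2 : k + 1 + d - (k + 1) = d := by omega
        have e3 : k + 1 + d - 1 = d + k := by omega
        have e4 : 2 ^ (d + 1) - 2 ^ d = 2 ^ d := by rw [pow_succ]; omega
        rw [e1, e2, e3, e4, smul_eq_mul, pow_add]; ring
      · intro x
        simp only [Finset.mem_filter, Finset.mem_univ, true_and]
        exact fun h => (pow_dvd_pow _ (Nat.le_succ k)).trans h
    · intro x hx
      simp only [Finset.mem_sdiff, Finset.mem_filter, Finset.mem_univ, true_and] at hx
      obtain ⟨v, rfl⟩ := aux_unit r k x hx.1 hx.2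
      exact aux_fiber r t k ht (by omega) u v
    · rw [Finset.disjoint_left]
      intro x
      simp only [Finset.mem_sdiff, Finset.mem_filter, Finset.mem_univ, true_and]
      tauto

/-- For `m = 2^t u` with `u` a unit of `ℤ/2^r` and `t < r`, the number of pairs
`(x, y)` with `x y = m` equals `(t+1) 2^{r-1}`. -/
theorem stmt_9 (r t : ℕ) (hr : 1 ≤ r) (ht : t < r) (u : (ZMod (2 ^ r))ˣ) :
    Nat.card {s : ZMod (2 ^ r) × ZMod (2 ^ r) //
      s.1 * s.2 = (2 : ZMod (2 ^ r)) ^ t * (u : ZMod (2 ^ r))} = (t + 1) * 2 ^ (r - 1) := by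
  classical
  rw [← aux_sum r t ht u (t + 1) le_rfl,
    Nat.card_congr (Equiv.subtypeProdEquivSigmaSubtype
      (fun x y : ZMod (2 ^ r) => x * y = 2 ^ t * (u : ZMod (2 ^ r)))), Nat.card_sigma]
  symm
  apply Finset.sum_subset (Finset.subset_univ _)
  intro x _ hx
  simp only [Finset.mem_filter, Finset.mem_univ, true_and, not_not] at hx
  rw [Nat.card_eq_zero]
  left
  refine ⟨fun ⟨y, hy⟩ => aux_empty r t ht u ?_⟩
  rw [← hy]
  exact hx.mul_right y
end

section
/- Let r and a be natural numbers with 2a < r. Then for every k ∈ Z_{2^r}, the number of elements t ∈ Z_{2^r} with t^2 = 2^{2a} + 2^{2a+3} k equals 2^{min(a+2, r-a-1)}; moreover, every such t is of the form 2^a u for a unit u of Z_{2^r}. -/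
theorem aux_zero (r : ℕ) (x y : ℤ) : ((x : ZMod (2 ^ r)) = (y : ZMod (2 ^ r))) ↔ (2 : ℤ) ^ r ∣ x - y := by
  rw [eq_comm, ZMod.intCast_eq_intCast_iff_dvd_sub]
  push_cast
  rfl

theorem aux_class (r j : ℕ) (hj : j ≤ r) (c : ℤ) :
    Set.ncard {t : ZMod (2 ^ r) | ∃ x : ℤ, t = ((c + 2 ^ j * x : ℤ) : ZMod (2 ^ r))} = 2 ^ (r - j) := by
  have h : {t : ZMod (2 ^ r) | ∃ x : ℤ, t = ((c + 2 ^ j * x : ℤ) : ZMod (2 ^ r))} =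
      (fun i : ℕ => ((c + 2 ^ j * (i : ℤ) : ℤ) : ZMod (2 ^ r))) ''
        (Finset.range (2 ^ (r - j)) : Set ℕ) := by
    ext t
    simp only [Set.mem_setOf_eq, Set.mem_image, Finset.coe_range, Set.mem_Iio]
    constructor
    · rintro ⟨x, rfl⟩
      have hp : (0 : ℤ) < 2 ^ (r - j) := by positivity
      refine ⟨(x % 2 ^ (r - j)).toNat, ?_, ?_⟩
      · have h1 := Int.emod_lt_of_pos x hp
        have h2 := Int.emod_nonneg x hp.ne'
        zify
        rw [Int.toNat_of_nonneg h2]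
        exact h1
      · rw [Int.toNat_of_nonneg (Int.emod_nonneg x hp.ne'), aux_zero]
        refine ⟨-(x / 2 ^ (r - j)), ?_⟩
        have h3 := Int.emod_add_mul_ediv x (2 ^ (r - j))
        have h4 : (2 : ℤ) ^ r = 2 ^ j * 2 ^ (r - j) := by rw [← pow_add]; congr 1; omega
        rw [h4]
        linear_combination 2 ^ j * h3
    · rintro ⟨i, -, rfl⟩
      exact ⟨i, rfl⟩
  rw [h, Set.ncard_image_of_injOn, Set.ncard_coe_finset, Finset.card_range]
  intro i hi i' hi' e
  simp only [Finset.coe_range, Set.mem_Iio] at hi hi'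
  simp only [aux_zero] at e
  have h4 : (2 : ℤ) ^ r = 2 ^ j * 2 ^ (r - j) := by rw [← pow_add]; congr 1; omega
  have h5 : c + 2 ^ j * (i : ℤ) - (c + 2 ^ j * (i' : ℤ)) = 2 ^ j * ((i : ℤ) - i') := by ring
  rw [h4, h5] at e
  have e := Int.dvd_of_mul_dvd_mul_left (by positivity) e
  zify at hi hi'
  have := Int.eq_zero_of_abs_lt_dvd e (by rw [abs_lt]; constructor <;> omega)
  omega

theorem aux_sqrt (k : ℤ) (n : ℕ) : ∃ s : ℤ, Odd s ∧ (2 : ℤ) ^ (n + 3) ∣ s ^ 2 - (1 + 8 * k) := by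
  induction n with
  | zero => exact ⟨1, odd_one, -k, by ring⟩
  | succ n ih =>
    obtain ⟨s, hs, q, hq⟩ := ih
    rcases Int.even_or_odd q with ⟨w, hw⟩ | hodd
    · exact ⟨s, hs, w, by rw [hq, hw]; ring⟩
    · obtain ⟨w, hw⟩ := hodd.add_odd hs
      refine ⟨s + 2 ^ (n + 2), ?_, w + 2 ^ n, ?_⟩
      · exact hs.add_even ⟨2 ^ (n + 1), by ring⟩
      · have : (s + 2 ^ (n + 2)) ^ 2 - (1 + 8 * k) = (s ^ 2 - (1 + 8 * k)) + 2 ^ (n + 3) * s + 2 ^ (n + 2) * 2 ^ (n + 2) := by ring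
        rw [this, hq]
        linear_combination 2 ^ (n + 3) * hw

theorem aux_unit_s12 (r : ℕ) (y : ℤ) (hy : Odd y) : IsUnit (y : ZMod (2 ^ r)) := by
  rw [ZMod.coe_int_isUnit_iff_isCoprime]
  push_cast
  apply IsCoprime.pow_left
  obtain ⟨w, hw⟩ := hy
  exact ⟨-w, 1, by rw [hw]; ring⟩

/-- characterization -/
theorem aux_char (r a : ℕ) (ha : 2 * a < r) (k x : ℤ) :
    ((x : ZMod (2 ^ r)) ^ 2 = 2 ^ (2 * a) + 2 ^ (2 * a + 3) * (k : ZMod (2 ^ r))) ↔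
    ∃ y : ℤ, x = 2 ^ a * y ∧ Odd y ∧ (2 : ℤ) ^ (r - 2 * a) ∣ y ^ 2 - (1 + 8 * k) := by
  have h0 : ((x : ZMod (2 ^ r)) ^ 2 = 2 ^ (2 * a) + 2 ^ (2 * a + 3) * (k : ZMod (2 ^ r))) ↔
      (2 : ℤ) ^ r ∣ x ^ 2 - 2 ^ (2 * a) * (1 + 8 * k) := by
    rw [← aux_zero]
    push_cast
    have : (2 : ZMod (2 ^ r)) ^ (2 * a) * (1 + 8 * (k : ZMod (2 ^ r))) =
      2 ^ (2 * a) + 2 ^ (2 * a + 3) * (k : ZMod (2 ^ r)) := by ring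
    rw [this]
  have h4 : (2 : ℤ) ^ r = 2 ^ (2 * a) * 2 ^ (r - 2 * a) := by rw [← pow_add]; congr 1; omega
  rw [h0, h4]
  constructor
  · intro h
    have h1 : (2 ^ a) ^ 2 ∣ x ^ 2 := by
      have := (dvd_mul_right _ _).trans h
      rw [← pow_mul, mul_comm a]
      exact (dvd_sub_left (dvd_mul_right _ _)).1 this
    obtain ⟨y, rfl⟩ := (Int.pow_dvd_pow_iff two_ne_zero).1 h1
    have h5 : (2 ^ a * y) ^ 2 - 2 ^ (2 * a) * (1 + 8 * k) = 2 ^ (2 * a) * (y ^ 2 - (1 + 8 * k)) := by ring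
    rw [h5] at h
    have h := Int.dvd_of_mul_dvd_mul_left (by positivity) h
    refine ⟨y, rfl, ?_, h⟩
    have h2 : (2 : ℤ) ∣ y ^ 2 - (1 + 8 * k) := (dvd_pow_self 2 (by omega)).trans h
    by_contra hne
    obtain ⟨w, hw⟩ := Int.not_odd_iff_even.1 hne
    obtain ⟨v, hv⟩ := h2
    rw [hw] at hv
    have : (w + w) ^ 2 = 2 * (2 * w ^ 2) := by ring
    omega
  · rintro ⟨y, rfl, -, h⟩
    have h5 : (2 ^ a * y) ^ 2 - 2 ^ (2 * a) * (1 + 8 * k) = 2 ^ (2 * a) * (y ^ 2 - (1 + 8 * k)) := by ring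
    rw [h5]
    exact mul_dvd_mul_left _ h

theorem aux_pm (m : ℕ) (y : ℤ) (hy : Odd y) (h : (2 : ℤ) ^ (m + 2) ∣ y ^ 2 - 1) :
    (2 : ℤ) ^ (m + 1) ∣ y - 1 ∨ (2 : ℤ) ^ (m + 1) ∣ y + 1 := by
  obtain ⟨z, rfl⟩ := hy
  have e : (2 * z + 1) ^ 2 - 1 = 2 ^ 2 * (z * (z + 1)) := by ring
  rw [e, pow_add, mul_comm] at h
  have h : (2 : ℤ) ^ m ∣ z * (z + 1) := Int.dvd_of_mul_dvd_mul_left (by norm_num) h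
  rcases Int.even_or_odd z with ⟨w, hw⟩ | ⟨w, hw⟩
  · left
    have : IsCoprime ((2 : ℤ) ^ m) (z + 1) := IsCoprime.pow_left ⟨-w, 1, by rw [hw]; ring⟩
    obtain ⟨v, hv⟩ := this.dvd_of_dvd_mul_right h
    exact ⟨v, by rw [hv]; ring⟩
  · right
    have : IsCoprime ((2 : ℤ) ^ m) z := IsCoprime.pow_left ⟨-w, 1, by rw [hw]; ring⟩
    obtain ⟨v, hv⟩ := this.dvd_of_dvd_mul_left h
    exact ⟨v, by linear_combination 2 * hv⟩

theorem aux_count (r a : ℕ) (ha : 2 * a < r) :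
    Set.ncard {t : ZMod (2 ^ r) | t ^ 2 = 2 ^ (2 * a) + 2 ^ (2 * a + 3) * ((0 : ℤ) : ZMod (2 ^ r))}
      = 2 ^ min (a + 2) (r - a - 1) := by
  by_cases hm : r ≤ 2 * a + 2
  · have e : min (a + 2) (r - a - 1) = r - (a + 1) := by omega
    rw [e, ← aux_class r (a + 1) (by omega) (2 ^ a)]
    congr 1
    ext t
    obtain ⟨x, rfl⟩ := ZMod.intCast_surjective t
    simp only [Set.mem_setOf_eq]
    constructor
    · intro h
      obtain ⟨y, rfl, ⟨w, rfl⟩, -⟩ := (aux_char r a ha 0 x).1 h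
      exact ⟨w, by congr 1; ring⟩
    · rintro ⟨w, hw⟩
      rw [hw, aux_char r a ha 0]
      refine ⟨2 * w + 1, by ring, ⟨w, rfl⟩, ?_⟩
      refine (pow_dvd_pow 2 (show r - 2 * a ≤ 2 by omega)).trans ⟨w ^ 2 + w, by ring⟩
  · obtain ⟨m, hr⟩ : ∃ m, r = 2 * a + (m + 3) := ⟨r - (2 * a + 3), by omega⟩
    have hm' : r - 2 * a = (m + 1) + 2 := by omega
    have e : min (a + 2) (r - a - 1) = (r - (a + m + 2)) + 1 := by omega
    have h1 := aux_class r (a + m + 2) (by omega) (2 ^ a)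
    have h2 := aux_class r (a + m + 2) (by omega) (-2 ^ a)
    have : NeZero (2 ^ r) := ⟨by positivity⟩
    rw [e, pow_succ 2 (r - (a + m + 2)), mul_two]
    nth_rewrite 1 [← h1]
    rw [← h2, ← Set.ncard_union_eq _ (Set.toFinite _) (Set.toFinite _)]
    · congr 1
      ext t
      obtain ⟨x, rfl⟩ := ZMod.intCast_surjective t
      simp only [Set.mem_setOf_eq, Set.mem_union]
      constructor
      · intro h
        obtain ⟨y, rfl, hy, h⟩ := (aux_char r a ha 0 x).1 h
        rw [hm'] at h
        rcases aux_pm (m + 1) y hy (by simpa using h) with ⟨w, hw⟩ | ⟨w, hw⟩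
        · left
          exact ⟨w, by congr 1; linear_combination 2 ^ a * hw⟩
        · right
          exact ⟨w, by congr 1; linear_combination 2 ^ a * hw⟩
      · rintro (⟨w, hw⟩ | ⟨w, hw⟩)
        · rw [hw, aux_char r a ha 0, hm']
          refine ⟨1 + 2 ^ (m + 2) * w, by ring, ⟨2 ^ (m + 1) * w, by ring⟩, 
            w + 2 ^ (m + 1) * w ^ 2, by ring⟩
        · rw [hw, aux_char r a ha 0, hm']
          refine ⟨-1 + 2 ^ (m + 2) * w, by ring, ⟨2 ^ (m + 1) * w - 1, by ring⟩, 
            -w + 2 ^ (m + 1) * w ^ 2, by ring⟩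
    · rw [Set.disjoint_left]
      rintro t ⟨x, hx⟩ ⟨y, hy⟩
      rw [hx, aux_zero] at hy
      obtain ⟨v, hv⟩ := hy
      have : (2 : ℤ) ^ (a + 1) * (1 + 2 ^ (m + 1) * (x - y)) = 2 ^ (a + 1) * (2 ^ (a + m + 2) * v) := by
        rw [hr] at hv
        linear_combination hv
      have := mul_left_cancel₀ (by positivity) this
      have h6 : (2 : ℤ) ^ (m + 1) * (x - y) = 2 * (2 ^ m * (x - y)) := by ring
      have h7 : (2 : ℤ) ^ (a + m + 2) * v = 2 * (2 ^ (a + m + 1) * v) := by ring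
      omega

/-- For `2a < r` and any `k`, the number of `t ∈ ℤ/2^r` with
`t² = 2^{2a} + 2^{2a+3} k` equals `2^{min(a+2, r-a-1)}`, and every such `t`
equals `2^a` times a unit. -/
theorem stmt_12 (r a : ℕ) (ha : 2 * a < r) (k : ZMod (2 ^ r)) :
    Nat.card {t : ZMod (2 ^ r) //
      t ^ 2 = (2 : ZMod (2 ^ r)) ^ (2 * a) + (2 : ZMod (2 ^ r)) ^ (2 * a + 3) * k}
      = 2 ^ min (a + 2) (r - a - 1) ∧
    ∀ t : ZMod (2 ^ r),
      t ^ 2 = (2 : ZMod (2 ^ r)) ^ (2 * a) + (2 : ZMod (2 ^ r)) ^ (2 * a + 3) * k →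
      ∃ u : (ZMod (2 ^ r))ˣ, t = (2 : ZMod (2 ^ r)) ^ a * (u : ZMod (2 ^ r)) := by
  obtain ⟨k, rfl⟩ := ZMod.intCast_surjective k
  constructor
  · rw [← aux_count r a ha]
    obtain ⟨s, hs, hd⟩ := aux_sqrt k r
    have hd := (aux_zero r _ _).2 ((pow_dvd_pow 2 (by omega)).trans hd)
    obtain ⟨u, hu⟩ := aux_unit_s12 r s hs
    push_cast at hd
    rw [← hu] at hd
    symm
    refine Nat.card_congr ((Units.mulRight u).subtypeEquiv ?_)
    intro t
    have hu2 : IsUnit ((u : ZMod (2 ^ r)) ^ 2) := u.isUnit.pow 2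
    simp only [Set.mem_setOf_eq, Units.mulRight_apply, Int.cast_zero]
    rw [mul_pow, ← hu2.mul_left_inj]
    have : (2 ^ (2 * a) + 2 ^ (2 * a + 3) * 0) * (u : ZMod (2 ^ r)) ^ 2 =
      2 ^ (2 * a) + 2 ^ (2 * a + 3) * (k : ZMod (2 ^ r)) := by rw [hd]; ring
    rw [this]
  · intro t ht
    obtain ⟨x, rfl⟩ := ZMod.intCast_surjective t
    obtain ⟨y, rfl, hy, -⟩ := (aux_char r a ha k x).1 ht
    obtain ⟨u, hu⟩ := aux_unit_s12 r y hy
    exact ⟨u, by rw [hu]; push_cast; rfl⟩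
end

section
/- Let r ≥ 1 and let P(x) = a x^2 + b x + c be a polynomial over Z_{2^r}, where b = 2^h g for a natural number h < r and a unit g of Z_{2^r}, and where a is divisible by 2^{h+1} in Z_{2^r}. Then for every y ∈ Z_{2^r}: if y - c is divisible by 2^h in Z_{2^r}, the number of x ∈ Z_{2^r} with P(x) = y equals 2^h, and otherwise there is no x ∈ Z_{2^r} with P(x) = y. -/
/-- For `P(x) = ax² + bx + c` over `ℤ/2^r` with `b = 2^h g` (`g` a unit, `h < r`)
and `2^{h+1} ∣ a`: if `2^h ∣ y - c` then `P(x) = y` has exactly `2^h` solutions,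
otherwise none. -/
theorem stmt_14 (r h : ℕ) (hr : 1 ≤ r) (hh : h < r)
    (a b c : ZMod (2 ^ r)) (g : (ZMod (2 ^ r))ˣ)
    (hb : b = (2 : ZMod (2 ^ r)) ^ h * (g : ZMod (2 ^ r)))
    (ha : ∃ a' : ZMod (2 ^ r), a = (2 : ZMod (2 ^ r)) ^ (h + 1) * a')
    (y : ZMod (2 ^ r)) :
    ((∃ c' : ZMod (2 ^ r), y - c = (2 : ZMod (2 ^ r)) ^ h * c') →
      Nat.card {x : ZMod (2 ^ r) // a * x ^ 2 + b * x + c = y} = 2 ^ h) ∧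
    ((¬ ∃ c' : ZMod (2 ^ r), y - c = (2 : ZMod (2 ^ r)) ^ h * c') →
      Nat.card {x : ZMod (2 ^ r) // a * x ^ 2 + b * x + c = y} = 0) := by
  obtain ⟨a', rfl⟩ := ha
  subst hb
  haveI : NeZero (2 ^ r) := ⟨by positivity⟩
  have h2 : IsNilpotent (2 : ZMod (2 ^ r)) := by
    refine ⟨r, ?_⟩
    have := ZMod.natCast_self (2 ^ r)
    push_cast at this
    exact this
  have hinj : Function.Injective
      (fun x : ZMod (2 ^ r) => 2 * a' * x ^ 2 + (g : ZMod (2 ^ r)) * x) := by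
    intro x z hxz
    simp only at hxz
    have hu : IsUnit ((g : ZMod (2 ^ r)) + 2 * (a' * (x + z))) :=
      IsNilpotent.isUnit_add_left_of_commute
        (Commute.isNilpotent_mul_right (Commute.all _ _) h2) g.isUnit (Commute.all _ _)
    have h0 : ((g : ZMod (2 ^ r)) + 2 * (a' * (x + z))) * (x - z) = 0 := by
      linear_combination hxz
    exact sub_eq_zero.mp ((hu.mul_right_eq_zero).mp h0)
  have hbij := Finite.injective_iff_bijective.mp hinj
  constructor
  · rintro ⟨c', hc'⟩
    have hker := IsAddCyclic.card_nsmulAddMonoidHom_ker (G := ZMod (2 ^ r)) (2 ^ h)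
    rw [Nat.card_zmod, Nat.gcd_eq_right (pow_dvd_pow 2 hh.le)] at hker
    rw [← hker]
    let e := (Equiv.ofBijective _ hbij).trans (Equiv.subRight c')
    refine Nat.card_congr (e.subtypeEquiv ?_)
    intro x
    have he : e x = 2 * a' * x ^ 2 + (g : ZMod (2 ^ r)) * x - c' := rfl
    rw [he, AddMonoidHom.mem_ker, nsmulAddMonoidHom_apply, nsmul_eq_mul]
    push_cast
    constructor
    · intro hx
      linear_combination hx + hc'
    · intro hx
      linear_combination hx - hc'
  · intro hn
    rw [Nat.card_eq_zero]
    left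
    refine ⟨fun ⟨x, hx⟩ => hn ⟨2 * a' * x ^ 2 + (g : ZMod (2 ^ r)) * x, ?_⟩⟩
    linear_combination -hx
end
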